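/- (Karrass–Magnus–Solitar 1960, torsion elements) Let A be a type, let r be a nontrivial, cyclically reduced element of FreeGroup A that is not a proper power, and let n ≥ 2. In the one-relator group G = ⟨A | rⁿ = 1⟩, every element of finite order is conjugate to a power of the image of r in G; that is, if g ∈ G satisfies g^k = 1 for some k ≥ 1, then there exist h ∈ G and an integer i with g = h · (image of r)^i · h⁻¹. -/

import Mathlib

/-- A word over `A` is cyclically reduced if its first and last letters are not
mutually inverse; an element of the free group is cyclically reduced if its
reduced word is. -/
def FreeGroup.CyclicallyReduced {A : Type*} [DecidableEq A] (w : FreeGroup A) : Prop :=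
  ∀ x : A × Bool, w.toWord.head? = some x → w.toWord.getLast? ≠ some (x.1, !x.2)

/-!
The proof is Magnus' induction on the length of the relator `w`, for the Freiheitssatz and the
description of the torsion together. If the exponent sum of a letter `t` in `w` vanishes, then `w`
can be rewritten as a shorter relator in the conjugates of the other letters by powers of `t`, and
by Moldavanskii's theorem `⟨A ∣ w = 1⟩` is an HNN extension, with stable letter `t`, of the group
with the shorter relator; the associated subgroups are free by the Freiheitssatz. An element of
finite order of an HNN extension is conjugate into the base group, to which the induction hypothesis
applies. If no exponent sum vanishes and at least two letters `b`, `c` occur, then Magnus'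
substitution creates a letter of exponent sum zero; it amounts to adjoining a root of `b`, and in
the resulting amalgam an element conjugating a nontrivial torsion element of `⟨A ∣ w = 1⟩` into
`⟨A ∣ w = 1⟩` belongs to `⟨A ∣ w = 1⟩`.

The root of the relator is not respected by these rewritings. Its centralizer is, so the induction
shows that elements of finite order are conjugate to images of elements of the centralizer of `w`
in the free group. For `w = r ^ n` with `r` not a proper power this centralizer is generated by `r`.
-/

namespace OneRelator

section Torsion

variable {P X : Type*} [Group P] {e : X → P} {R : X → X → Prop} {S : Set P}

/-- `g` is conjugate to an element of `S` or to a product of fewer than `n` letters `e x`. -/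
def ConjShorter (e : X → P) (S : Set P) (n : ℕ) (g : P) : Prop :=
  g ∈ Group.conjugatesOfSet S ∨ ∃ L : List X, L.length < n ∧ IsConj (L.map e).prod g

theorem mem_conjugatesOfSet_of_isConj {g h : P} (hg : g ∈ Group.conjugatesOfSet S)
    (hgh : IsConj g h) : h ∈ Group.conjugatesOfSet S :=
  let ⟨s, hs, hsg⟩ := Group.mem_conjugatesOfSet_iff.1 hg
  Group.mem_conjugatesOfSet_iff.2 ⟨s, hs, hsg.trans hgh⟩

theorem ConjShorter.of_isConj {n : ℕ} {g h : P} (hg : ConjShorter e S n g) (hgh : IsConj g h) :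
    ConjShorter e S n h :=
  hg.imp (mem_conjugatesOfSet_of_isConj · hgh) fun ⟨L, hlt, hL⟩ => ⟨L, hlt, hL.trans hgh⟩

theorem ConjShorter.mono {m n : ℕ} (hmn : m ≤ n) {g : P} (hg : ConjShorter e S m g) :
    ConjShorter e S n g :=
  hg.imp_right fun ⟨L, hlt, hL⟩ => ⟨L, hlt.trans_le hmn, hL⟩

/-- The letters `e x` have normal forms relative to `S`: the product of a nonempty `R`-chain is
nontrivial, and a product which begins with two unrelated letters can be shortened up to
conjugacy. Free products and HNN extensions are the examples. -/
structure HasChainForm (e : X → P) (R : X → X → Prop) (S : Set P) : Prop where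
  one_mem : 1 ∈ S
  conjShorter (g : P) : ∃ n, ConjShorter e S n g
  conjShorter_of_not_rel {a b : X} (hab : ¬ R a b) (L : List X) :
    ConjShorter e S (L.length + 2) ((a :: b :: L).map e).prod
  rel_self_or_mem (a : X) : R a a ∨ e a ∈ Group.conjugatesOfSet S
  eq_nil_of_prod_eq_one {L : List X} : L.IsChain R → (L.map e).prod = 1 → L = []

/-- A list of minimal length whose product is conjugate to `g` is cyclically related, because
each of its rotations is minimal too. -/
theorem HasChainForm.exists_cyclic_chain (H : HasChainForm e R S) {g : P}
    (hg : g ∉ Group.conjugatesOfSet S) :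
    ∃ M : List X, M ≠ [] ∧ IsConj (M.map e).prod g ∧ M.IsChain R ∧
      ∀ x ∈ M.getLast?, ∀ y ∈ M.head?, R x y := by
  obtain ⟨_, hn⟩ := H.conjShorter g
  obtain ⟨L, -, hL⟩ := hn.resolve_left hg
  obtain ⟨M, hM, hmin⟩ := exists_minimalFor_of_wellFoundedLT
    (fun M : List X => IsConj (M.map e).prod g) List.length ⟨L, hL⟩
  have rel_of_cons {a b : X} {N : List X} (hlen : N.length + 2 = M.length)
      (hN : IsConj ((a :: b :: N).map e).prod g) : R a b := by
    by_contra hab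
    obtain ⟨L', hlt, hL'⟩ := ((H.conjShorter_of_not_rel hab N).of_isConj hN).resolve_left hg
    exact absurd (hmin hL' (by omega)) (by omega)
  refine ⟨M, ?_, hM, ?_, ?_⟩
  · rintro rfl
    exact hg (mem_conjugatesOfSet_of_isConj (Group.subset_conjugatesOfSet H.one_mem) hM)
  · refine List.isChain_iff_forall_rel_of_append_cons_cons.2 ?_
    rintro a b M₁ M₂ rfl
    refine rel_of_cons (N := M₂ ++ M₁) (by simp; omega) (IsConj.trans ?_ hM)
    exact isConj_iff.2 ⟨(M₁.map e).prod, by simp [mul_assoc]⟩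
  · intro x hx y hy
    obtain ⟨N, rfl⟩ := List.getLast?_eq_some_iff.1 hx
    cases N with
    | nil =>
      obtain rfl : x = y := by simpa using hy
      exact (H.rel_self_or_mem x).resolve_right
        fun hx => hg (mem_conjugatesOfSet_of_isConj hx (by simpa using hM))
    | cons z N =>
      obtain rfl : z = y := by simpa using hy
      refine rel_of_cons (N := N) (by simp) (IsConj.trans ?_ hM)
      exact isConj_iff.2 ⟨(e x)⁻¹, by simp [mul_assoc]⟩

theorem isChain_flatten_replicate {M : List X} (hne : M ≠ []) (hM : M.IsChain R)
    (hcyc : ∀ x ∈ M.getLast?, ∀ y ∈ M.head?, R x y) (k : ℕ) :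
    (List.replicate k M).flatten.IsChain R :=
  (List.isChain_flatten fun h => hne (List.eq_of_mem_replicate h).symm).2
    ⟨fun _ hl => List.eq_of_mem_replicate hl ▸ hM, List.isChain_replicate_of_rel k hcyc⟩

theorem HasChainForm.mem_conjugatesOfSet (H : HasChainForm e R S) {g : P}
    (hg : IsOfFinOrder g) : g ∈ Group.conjugatesOfSet S := by
  by_contra hgS
  obtain ⟨M, hne, hconj, hM, hcyc⟩ := H.exists_cyclic_chain hgS
  obtain ⟨k, hk, hpow⟩ := isOfFinOrder_iff_pow_eq_one.1 (hconj.symm.isOfFinOrder hg)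
  have hnil := H.eq_nil_of_prod_eq_one (isChain_flatten_replicate hne hM hcyc k) (by
    simpa only [List.map_flatten, List.map_replicate, List.prod_flatten, List.prod_replicate])
  simp only [List.flatten_eq_nil_iff, List.mem_replicate] at hnil
  exact hne (hnil M ⟨hk.ne', rfl⟩)

end Torsion

section HNN

open HNNExtension HNNExtension.NormalWord

variable {G : Type*} [Group G] {A B : Subgroup G} {φ : A ≃* B}

/-- The element `tᵘ g` of an HNN extension, the letter of which normal words are made. -/
def hnnLetter (φ : A ≃* B) (x : ℤˣ × G) : HNNExtension G A B φ :=
  t ^ (x.1 : ℤ) * of x.2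

theorem conjShorter_of_mul_prod_hnnLetter (h : G) (L : List (ℤˣ × G)) :
    ConjShorter (hnnLetter φ) (of (φ := φ)).range (L.length + 1)
      (of h * (L.map (hnnLetter φ)).prod) := by
  rcases List.eq_nil_or_concat L with rfl | ⟨L, x, rfl⟩
  · exact .inl (Group.subset_conjugatesOfSet ⟨h, by simp⟩)
  · refine .inr ⟨L ++ [(x.1, x.2 * h)], by simp, isConj_iff.2 ⟨of h, ?_⟩⟩
    simp [hnnLetter, mul_assoc]

theorem exists_t_zpow_mul_of_mul_t_zpow (u : ℤˣ) {x : G} (hx : x ∈ toSubgroup A B u) :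
    ∃ z : G, (t ^ (u : ℤ) * of x * t ^ ((-u : ℤˣ) : ℤ) : HNNExtension G A B φ) = of z := by
  rcases Int.units_eq_one_or u with rfl | rfl
  · exact ⟨φ ⟨x, hx⟩, by simp [equiv_eq_conj (φ := φ) ⟨x, hx⟩]⟩
  · exact ⟨φ.symm ⟨x, hx⟩, by simp [equiv_symm_eq_conj (φ := φ) ⟨x, hx⟩]⟩

theorem conjShorter_of_hnn_pinch {a b : ℤˣ × G} (ha : a.2 ∈ toSubgroup A B a.1) (hab : a.1 ≠ b.1)
    (L : List (ℤˣ × G)) :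
    ConjShorter (hnnLetter φ) (of (φ := φ)).range (L.length + 1)
      ((a :: b :: L).map (hnnLetter φ)).prod := by
  obtain ⟨z, hz⟩ := exists_t_zpow_mul_of_mul_t_zpow (φ := φ) a.1 ha
  have hb : b.1 = -a.1 := (Int.units_ne_iff_eq_neg.1 hab.symm)
  have hprod : ((a :: b :: L).map (hnnLetter φ)).prod =
      of (z * b.2) * (L.map (hnnLetter φ)).prod := by
    simp only [List.map_cons, List.prod_cons, hnnLetter, map_mul, ← hz, hb, mul_assoc]
  exact hprod ▸ conjShorter_of_mul_prod_hnnLetter _ L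

theorem hasChainForm_hnn : HasChainForm (hnnLetter φ)
    (fun a b => a.2 ∈ toSubgroup A B a.1 → a.1 = b.1) (of (φ := φ)).range where
  one_mem := one_mem _
  conjShorter g := by
    classical
    obtain ⟨d⟩ := TransversalPair.nonempty G A B
    let w := NormalWord.equiv φ d g
    have hw : of w.head * (w.toList.map (hnnLetter φ)).prod = g :=
      (NormalWord.equiv φ d).left_inv g
    exact ⟨_, hw ▸ conjShorter_of_mul_prod_hnnLetter _ _⟩
  conjShorter_of_not_rel hab L :=
    (conjShorter_of_hnn_pinch (Classical.not_imp.1 hab).1 (Classical.not_imp.1 hab).2 L).mono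
      (by omega)
  rel_self_or_mem _ := .inl fun _ => rfl
  eq_nil_of_prod_eq_one {L} hL hprod := by
    let w : ReducedWord G A B := ⟨1, L, hL⟩
    have hw : w.prod φ = 1 := by
      simpa only [ReducedWord.prod, w, map_one, one_mul] using! hprod
    exact ReducedWord.toList_eq_nil_of_mem_of_range φ w (hw ▸ one_mem _)

theorem exists_isConj_hnn_of {g : HNNExtension G A B φ} (hg : IsOfFinOrder g) :
    ∃ h : G, IsConj (of h) g := by
  obtain ⟨_, ⟨h, rfl⟩, hconj⟩ :=
    Group.mem_conjugatesOfSet_iff.1 (hasChainForm_hnn.mem_conjugatesOfSet hg)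
  exact ⟨h, hconj⟩

end HNN

section FreeProduct

open Monoid CoprodI

variable {ι : Type*} {G : ι → Type*} [∀ i, Group (G i)]

/-- A nontrivial element of a factor, the letter of which words in a free product are made. -/
def coprodLetter (x : Σ i, {g : G i // g ≠ 1}) : CoprodI G :=
  of x.2.1

theorem conjShorter_of_coprod_merge {i : ι} (x y : {g : G i // g ≠ 1})
    (L : List (Σ i, {g : G i // g ≠ 1})) :
    ConjShorter coprodLetter (⋃ i, Set.range (of : G i → CoprodI G)) (L.length + 2)
      ((⟨i, x⟩ :: ⟨i, y⟩ :: L).map coprodLetter).prod := by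
  right
  by_cases hxy : x.1 * y.1 = 1
  · refine ⟨L, by omega, ?_⟩
    simp only [List.map_cons, List.prod_cons, coprodLetter, ← mul_assoc, ← map_mul, hxy, map_one,
      one_mul, IsConj.refl]
  · refine ⟨⟨i, x.1 * y.1, hxy⟩ :: L, by simp, ?_⟩
    simp only [List.map_cons, List.prod_cons, coprodLetter, map_mul, mul_assoc, IsConj.refl]

theorem hasChainForm_coprodI [Nonempty ι] : HasChainForm coprodLetter (fun a b => a.1 ≠ b.1)
    (⋃ i, Set.range (of : G i → CoprodI G)) where
  one_mem := Set.mem_iUnion.2 ⟨Classical.arbitrary ι, 1, map_one _⟩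
  conjShorter g := by
    classical
    obtain ⟨w, rfl⟩ := Word.equiv.symm.surjective g
    refine ⟨_, .inr ⟨w.toList.pmap (fun l hl => ⟨l.1, l.2, hl⟩) w.ne_one, Nat.lt_succ_self _, ?_⟩⟩
    have hmap : (w.toList.pmap (fun l hl => ⟨l.1, l.2, hl⟩) w.ne_one).map coprodLetter =
        w.toList.map fun l => of l.2 := by
      simp only [List.map_pmap, coprodLetter]
      exact List.pmap_eq_map _
    exact hmap ▸ IsConj.refl _
  conjShorter_of_not_rel {a b} hab L := by
    obtain ⟨i, x⟩ := a
    obtain ⟨j, y⟩ := b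
    obtain rfl : i = j := not_not.1 hab
    exact conjShorter_of_coprod_merge x y L
  rel_self_or_mem a :=
    .inr (Group.subset_conjugatesOfSet (Set.mem_iUnion.2 ⟨a.1, a.2.1, rfl⟩))
  eq_nil_of_prod_eq_one {L} hL hprod := by
    classical
    let w : Word G := ⟨L.map fun a => ⟨a.1, a.2.1⟩,
      fun _ hl => by obtain ⟨a, -, rfl⟩ := List.mem_map.1 hl; exact a.2.2,
      (List.isChain_map _).2 hL⟩
    have hw : w = Word.empty := Word.equiv.symm.injective (by
      simpa [Word.equiv, Word.prod, w, Function.comp_def, Word.empty] using! hprod)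
    exact List.map_eq_nil_iff.1 (congrArg Word.toList hw)

theorem exists_isConj_coprodI_of [Nonempty ι] {g : CoprodI G} (hg : IsOfFinOrder g) :
    ∃ (i : ι) (x : G i), IsConj (of x) g := by
  obtain ⟨_, hs, hconj⟩ :=
    Group.mem_conjugatesOfSet_iff.1 (hasChainForm_coprodI.mem_conjugatesOfSet hg)
  obtain ⟨i, x, rfl⟩ := Set.mem_iUnion.1 hs
  exact ⟨i, x, hconj⟩

end FreeProduct

section Amalgam

open Monoid PushoutI

variable {ι H : Type*} {G : ι → Type*} [∀ i, Group (G i)] [Group H] {φ : ∀ i, H →* G i}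

/-- The product in an amalgam of a list of elements of the factors. -/
def amalgamProd (φ : ∀ i, H →* G i) (L : List (Σ i, G i)) : PushoutI φ :=
  (L.map fun x => of x.1 x.2).prod

/-- Consecutive letters lie in different factors and no letter lies in the amalgamated subgroup:
the condition `Monoid.PushoutI.Reduced`, for lists instead of words. -/
structure IsReducedList (φ : ∀ i, H →* G i) (L : List (Σ i, G i)) : Prop where
  isChain : L.IsChain fun x y => x.1 ≠ y.1
  notMem_range : ∀ x ∈ L, x.2 ∉ (φ x.1).range

theorem IsReducedList.infix {L M : List (Σ i, G i)} (hL : IsReducedList φ L) (h : M <:+: L) :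
    IsReducedList φ M :=
  ⟨hL.isChain.infix h, fun x hx => hL.notMem_range x (h.subset hx)⟩

theorem IsReducedList.append {L M : List (Σ i, G i)} (hL : IsReducedList φ L)
    (hM : IsReducedList φ M) (h : ∀ x ∈ L.getLast?, ∀ y ∈ M.head?, x.1 ≠ y.1) :
    IsReducedList φ (L ++ M) :=
  ⟨hL.isChain.append hM.isChain h, fun x hx => (List.mem_append.1 hx).elim
    (hL.notMem_range x) (hM.notMem_range x)⟩

theorem isReducedList_singleton {i : ι} {g : G i} (hg : g ∉ (φ i).range) :
    IsReducedList φ [⟨i, g⟩] :=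
  ⟨List.isChain_singleton _, by simpa using hg⟩

theorem amalgamProd_append (L M : List (Σ i, G i)) :
    amalgamProd φ (L ++ M) = amalgamProd φ L * amalgamProd φ M := by
  simp [amalgamProd]

theorem amalgamProd_singleton (i : ι) (g : G i) : amalgamProd φ [⟨i, g⟩] = of i g := by
  simp [amalgamProd]

/-- The formal inverse of a list of elements of the factors. -/
def invList (L : List (Σ i, G i)) : List (Σ i, G i) :=
  L.reverse.map fun x => ⟨x.1, x.2⁻¹⟩

theorem amalgamProd_invList (L : List (Σ i, G i)) :
    amalgamProd φ (invList L) = (amalgamProd φ L)⁻¹ := by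
  simp [amalgamProd, invList, List.prod_inv_reverse, Function.comp_def]

theorem IsReducedList.invList {L : List (Σ i, G i)} (hL : IsReducedList φ L) :
    IsReducedList φ (invList L) where
  isChain := by
    rw [OneRelator.invList, List.isChain_map, List.isChain_reverse]
    exact hL.isChain.imp fun _ _ h => h.symm
  notMem_range := by
    intro x hx
    obtain ⟨y, hy, rfl⟩ := List.mem_map.1 hx
    exact mt inv_mem_iff.1 (hL.notMem_range y (List.mem_reverse.1 hy))

theorem IsReducedList.eq_nil_of_mem_range_base (hφ : ∀ i, Function.Injective (φ i))
    {L : List (Σ i, G i)} (hL : IsReducedList φ L) (h : amalgamProd φ L ∈ (base φ).range) :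
    L = [] := by
  let w : CoprodI.Word G := ⟨L, fun x hx h1 => hL.notMem_range x hx (h1 ▸ one_mem _), hL.isChain⟩
  have hw : ofCoprodI w.prod = amalgamProd φ L := by
    simp [CoprodI.Word.prod, amalgamProd, w, map_list_prod, Function.comp_def]
  exact congrArg CoprodI.Word.toList
    (Reduced.eq_empty_of_mem_range hφ (w := w) hL.notMem_range (hw ▸ h))

theorem IsReducedList.eq_nil_of_mem_range_of (hφ : ∀ i, Function.Injective (φ i)) {i : ι}
    {L : List (Σ i, G i)} (hL : IsReducedList φ L) (hlast : ∀ x ∈ L.getLast?, x.1 ≠ i)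
    (h : amalgamProd φ L ∈ (of (φ := φ) i).range) : L = [] := by
  obtain ⟨g, hg⟩ := h
  by_cases hgr : g ∈ (φ i).range
  · obtain ⟨z, rfl⟩ := hgr
    exact hL.eq_nil_of_mem_range_base hφ ⟨z, by rw [← hg, of_apply_eq_base]⟩
  · have hred : IsReducedList φ (L ++ [⟨i, g⁻¹⟩]) :=
      hL.append (isReducedList_singleton (by simpa using hgr)) (by simpa using hlast)
    have hnil := hred.eq_nil_of_mem_range_base hφ (by
      simp [amalgamProd_append, amalgamProd_singleton, ← hg])
    simp at hnil

theorem exists_base_mul_amalgamProd (hφ : ∀ i, Function.Injective (φ i)) (u : PushoutI φ) :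
    ∃ h L, IsReducedList φ L ∧ u = base φ h * amalgamProd φ L := by
  classical
  obtain ⟨d⟩ := NormalWord.transversal_nonempty φ hφ
  obtain ⟨w, rfl⟩ := (NormalWord.equiv (d := d)).symm.surjective u
  refine ⟨w.head, w.toList, ⟨w.chain_ne, fun ⟨i, g⟩ hx hg => w.ne_one _ hx ?_⟩, ?_⟩
  · have hsnd := (Subgroup.IsComplement.coe_equiv_snd_eq_one_iff_mem (d.compl i) (d.one_mem i)).2 hg
    rwa [(d.compl i).equiv_snd_eq_self_of_mem_of_one_mem (one_mem _) (w.normalized _ _ hx)] at hsnd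
  · simp [NormalWord.equiv, NormalWord.prod, CoprodI.Word.prod, amalgamProd, map_list_prod,
      Function.comp_def]

theorem IsReducedList.exists_strip_last {L : List (Σ i, G i)} (hL : IsReducedList φ L) (i : ι) :
    ∃ M g, M <+: L ∧ (∀ x ∈ M.getLast?, x.1 ≠ i) ∧
      amalgamProd φ L = amalgamProd φ M * of i g := by
  rcases List.eq_nil_or_concat L with rfl | ⟨M, ⟨j, g⟩, rfl⟩
  · exact ⟨[], 1, by simp⟩
  rw [List.concat_eq_append] at hL ⊢
  by_cases hj : j = i
  · subst hj
    have hlast := (List.isChain_append.1 hL.isChain).2.2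
    exact ⟨M, g, List.prefix_append _ _, fun x hx => hlast x hx _ rfl, by
      rw [amalgamProd_append, amalgamProd_singleton]⟩
  · exact ⟨_, 1, List.prefix_rfl, by simpa using hj, by simp⟩

theorem IsReducedList.exists_strip_head {L : List (Σ i, G i)} (hL : IsReducedList φ L) (i : ι) :
    ∃ M g, M <:+ L ∧ (∀ x ∈ M.head?, x.1 ≠ i) ∧
      amalgamProd φ L = of i g * amalgamProd φ M := by
  rcases L with _ | ⟨⟨j, g⟩, M⟩
  · exact ⟨[], 1, by simp⟩
  by_cases hj : j = i
  · subst hj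
    have hhead := (List.isChain_cons.1 hL.isChain).1
    exact ⟨M, g, List.suffix_cons _ _, fun x hx => (hhead x hx).symm, by
      rw [← List.singleton_append, amalgamProd_append, amalgamProd_singleton]⟩
  · exact ⟨_, 1, List.suffix_rfl, by simpa using hj, by simp⟩

theorem exists_of_mul_amalgamProd_mul_of (hφ : ∀ i, Function.Injective (φ i)) (i : ι)
    (u : PushoutI φ) :
    ∃ L y₀ y, IsReducedList φ L ∧ (∀ x ∈ L.head?, x.1 ≠ i) ∧ (∀ x ∈ L.getLast?, x.1 ≠ i) ∧
      u = of i y₀ * amalgamProd φ L * of i y := by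
  obtain ⟨h, L, hL, rfl⟩ := exists_base_mul_amalgamProd hφ u
  obtain ⟨M, g, hML, hMhead, hM⟩ := hL.exists_strip_head i
  obtain ⟨N, y, hNM, hNlast, hN⟩ := (hL.infix hML.isInfix).exists_strip_last i
  refine ⟨N, φ i h * g, y, hL.infix (hNM.isInfix.trans hML.isInfix), fun x hx => ?_, hNlast, ?_⟩
  · obtain ⟨T, rfl⟩ := hNM
    exact hMhead x (List.mem_head?_append_of_mem_head? hx)
  · rw [hM, hN, map_mul, of_apply_eq_base, mul_assoc, mul_assoc]

/-- An element outside the factor `G i` has a reduced expression `y₀ L y` with `y₀, y` in `G i`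
and `L` nonempty, and conjugation by it turns `c` into the reduced list `L (y c y⁻¹) L⁻¹`. -/
theorem mem_range_of_of_conj_eq (hφ : ∀ i, Function.Injective (φ i)) {i : ι} {c c' : G i}
    (hc : ∀ y, y * c * y⁻¹ ∉ (φ i).range) {u : PushoutI φ}
    (hu : u * of i c * u⁻¹ = of i c') : u ∈ (of (φ := φ) i).range := by
  obtain ⟨L, y₀, y, hL, hhead, hlast, rfl⟩ := exists_of_mul_amalgamProd_mul_of hφ i u
  have hmid := isReducedList_singleton (hc y)
  have hinv_head : ∀ x ∈ (invList L).head?, x.1 ≠ i := by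
    intro x hx
    simp only [invList, List.head?_map, List.head?_reverse, Option.mem_def,
      Option.map_eq_some_iff] at hx
    obtain ⟨a, ha, rfl⟩ := hx
    exact hlast a ha
  have hinv_last : ∀ x ∈ (invList L).getLast?, x.1 ≠ i := by
    intro x hx
    simp only [invList, List.getLast?_map, List.getLast?_reverse, Option.mem_def,
      Option.map_eq_some_iff] at hx
    obtain ⟨a, ha, rfl⟩ := hx
    exact hhead a ha
  have hred := (hL.append hmid (by simpa using hlast)).append hL.invList (by
    simpa [eq_comm] using hinv_head)
  have hnil : L = [] := by
    by_contra hne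
    have hinv_ne : invList L ≠ [] := by simpa [invList] using hne
    refine absurd (hred.eq_nil_of_mem_range_of hφ (i := i) ?_ ⟨y₀⁻¹ * c' * y₀, ?_⟩) (by simp)
    · rwa [List.getLast?_append_of_ne_nil _ hinv_ne]
    · simp only [amalgamProd_append, amalgamProd_singleton, amalgamProd_invList, map_mul, map_inv,
        ← hu]
      group
  exact ⟨y₀ * y, by simp [hnil, amalgamProd]⟩

end Amalgam

section FreeGroup

open FreeGroup (of map)

variable {A A' : Type*}

/-- The reduced length of `w`. This is `FreeGroup.norm` for the classical equality on `A`, which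
keeps decidability instances out of the statements below. -/
noncomputable def len (w : FreeGroup A) : ℕ :=
  letI := Classical.decEq A
  w.norm

theorem len_one : len (1 : FreeGroup A) = 0 := by simp [len]

theorem len_of (a : A) : len (of a) = 1 := by simp [len]

theorem len_inv (w : FreeGroup A) : len w⁻¹ = len w := by simp [len]

theorem len_mul_le (v w : FreeGroup A) : len (v * w) ≤ len v + len w := by
  classical exact FreeGroup.norm_mul_le v w

/-- The subgroup of the elements in whose reduced words the letter `c` does not occur. -/
def avoiding (c : A) : Subgroup (FreeGroup A) :=
  Subgroup.closure (of '' {c}ᶜ)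

theorem of_mem_avoiding {c z : A} (h : z ≠ c) : of z ∈ avoiding c :=
  Subgroup.subset_closure ⟨z, h, rfl⟩

theorem exists_mk_eq_length_eq_len (w : FreeGroup A) :
    ∃ L : List (A × Bool), FreeGroup.mk L = w ∧ L.length = len w := by
  classical exact ⟨w.toWord, w.mk_toWord, by unfold len FreeGroup.norm; congr!⟩

theorem map_mem_of_mem_avoiding {M : Type*} [Group M] {f : FreeGroup A →* M} {K : Subgroup M}
    {c : A} (h : ∀ z, z ≠ c → f (of z) ∈ K) {v : FreeGroup A} (hv : v ∈ avoiding c) :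
    f v ∈ K := by
  have hle : avoiding c ≤ K.comap f :=
    (Subgroup.closure_le _).2 (by rintro _ ⟨z, hz, rfl⟩; exact h z hz)
  exact hle hv

/-- A symmetric, subadditive function on a free group that is at most `1` on the letters; such a
function is bounded by the length of reduced words. -/
structure IsLengthBound (f : FreeGroup A → ℕ) : Prop where
  map_one : f 1 = 0
  map_mul_le (v w : FreeGroup A) : f (v * w) ≤ f v + f w
  map_inv (w : FreeGroup A) : f w⁻¹ = f w
  map_of_le (a : A) : f (of a) ≤ 1

theorem isLengthBound_len_comp (g : FreeGroup A →* FreeGroup A')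
    (hg : ∀ a, len (g (of a)) ≤ 1) : IsLengthBound fun w => len (g w) where
  map_one := by simp [len_one]
  map_mul_le v w := by simp [len_mul_le]
  map_inv w := by simp [len_inv]
  map_of_le := hg

theorem mk_cons_eq_mul (x : A × Bool) (L : List (A × Bool)) :
    FreeGroup.mk (x :: L) = cond x.2 (of x.1) (of x.1)⁻¹ * FreeGroup.mk L := by
  obtain ⟨a, _ | _⟩ := x <;> simp [of, FreeGroup.inv_mk, FreeGroup.invRev, FreeGroup.mul_mk]

theorem IsLengthBound.mk_le {f : FreeGroup A → ℕ} (hf : IsLengthBound f) (x : A × Bool)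
    (L : List (A × Bool)) : f (FreeGroup.mk (x :: L)) ≤ f (of x.1) + f (FreeGroup.mk L) := by
  rw [mk_cons_eq_mul]
  refine (hf.map_mul_le _ _).trans_eq ?_
  cases x.2 <;> simp [hf.map_inv]

theorem IsLengthBound.mk_le_length {f : FreeGroup A → ℕ} (hf : IsLengthBound f)
    (L : List (A × Bool)) : f (FreeGroup.mk L) ≤ L.length := by
  induction L with
  | nil => exact hf.map_one.le
  | cons x L ih =>
    have := hf.mk_le x L
    have := hf.map_of_le x.1
    rw [List.length_cons]
    omega

theorem IsLengthBound.mk_lt_length {f : FreeGroup A → ℕ} (hf : IsLengthBound f) {b : A}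
    (hb : f (of b) = 0) {L : List (A × Bool)} (hL : ∃ x ∈ L, x.1 = b) :
    f (FreeGroup.mk L) < L.length := by
  obtain ⟨x, hx, rfl⟩ := hL
  induction L with
  | nil => simp at hx
  | cons y L ih =>
    have hle := hf.mk_le y L
    rw [List.length_cons]
    rcases List.mem_cons.1 hx with rfl | hx
    · have := hf.mk_le_length L
      omega
    · have := hf.map_of_le y.1
      have := ih hx
      omega

theorem mk_mem_avoiding {c : A} {L : List (A × Bool)} (h : ∀ x ∈ L, x.1 ≠ c) :
    FreeGroup.mk L ∈ avoiding c := by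
  induction L with
  | nil => exact one_mem _
  | cons x L ih =>
    rw [List.forall_mem_cons] at h
    rw [mk_cons_eq_mul]
    refine mul_mem ?_ (ih h.2)
    cases x.2
    · exact inv_mem (of_mem_avoiding h.1)
    · exact of_mem_avoiding h.1

theorem IsLengthBound.le_len {f : FreeGroup A → ℕ} (hf : IsLengthBound f) (w : FreeGroup A) :
    f w ≤ len w := by
  obtain ⟨L, rfl, hL⟩ := exists_mk_eq_length_eq_len w
  exact (hf.mk_le_length L).trans_eq hL

theorem IsLengthBound.lt_len {f : FreeGroup A → ℕ} (hf : IsLengthBound f) {b : A}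
    (hb : f (of b) = 0) {w : FreeGroup A} (hw : w ∉ avoiding b) : f w < len w := by
  obtain ⟨L, rfl, hL⟩ := exists_mk_eq_length_eq_len w
  refine (hf.mk_lt_length hb ?_).trans_eq hL
  by_contra! hne
  exact hw (mk_mem_avoiding hne)

open Classical in
/-- The endomorphism of the free group which sends the letter `c` to `1` and fixes the others. -/
noncomputable def erase (c : A) : FreeGroup A →* FreeGroup A :=
  FreeGroup.lift fun z => if z = c then 1 else of z

theorem erase_of_self (c : A) : erase c (of c) = 1 := by simp [erase]

theorem erase_of_ne {c z : A} (h : z ≠ c) : erase c (of z) = of z := by simp [erase, h]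

theorem isLengthBound_len_erase (c : A) : IsLengthBound fun w : FreeGroup A => len (erase c w) := by
  refine isLengthBound_len_comp _ fun a => ?_
  by_cases ha : a = c
  · simp [ha, erase_of_self, len_one]
  · simp [erase_of_ne ha, len_of]

theorem erase_eq_self {c : A} {v : FreeGroup A} (hv : v ∈ avoiding c) : erase c v = v := by
  have hmem : v ∈ (erase c).eqLocus (MonoidHom.id _) :=
    map_mem_of_mem_avoiding (f := MonoidHom.id _) (fun _ hz => erase_of_ne hz) hv
  exact hmem

theorem map_mem_of_forall_of_mem {M : Type*} [Group M] {f : FreeGroup A →* M} {K : Subgroup M}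
    (h : ∀ a, f (of a) ∈ K) (w : FreeGroup A) : f w ∈ K := by
  have hle : (⊤ : Subgroup (FreeGroup A)) ≤ K.comap f := by
    rw [← FreeGroup.closure_range_of, Subgroup.closure_le]
    rintro _ ⟨a, rfl⟩
    exact h a
  exact hle (Subgroup.mem_top w)

theorem erase_mem_avoiding (c : A) (w : FreeGroup A) : erase c w ∈ avoiding c := by
  refine map_mem_of_forall_of_mem (fun a => ?_) w
  by_cases ha : a = c
  · simp [ha, erase_of_self, one_mem]
  · simpa only [erase_of_ne ha] using of_mem_avoiding ha

/-- A word of minimal length for `w` uses only letters that do occur in `w`. -/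
theorem exists_mk_eq_of_notMem_avoiding (w : FreeGroup A) :
    ∃ L : List (A × Bool), FreeGroup.mk L = w ∧ ∀ x ∈ L, w ∉ avoiding x.1 := by
  obtain ⟨L, rfl, hL⟩ := exists_mk_eq_length_eq_len w
  refine ⟨L, rfl, fun x hx hw => ?_⟩
  have hlt := (isLengthBound_len_erase x.1).mk_lt_length (by simp [erase_of_self, len_one])
    ⟨x, hx, rfl⟩
  rw [erase_eq_self hw] at hlt
  omega

theorem finite_setOf_notMem_avoiding (w : FreeGroup A) : {c | w ∉ avoiding c}.Finite := by
  obtain ⟨L, rfl, -⟩ := exists_mk_eq_length_eq_len w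
  refine (L.map Prod.fst).finite_toSet.subset fun c hc => ?_
  by_contra hne
  exact hc (mk_mem_avoiding fun x hx hxc => hne (List.mem_map.2 ⟨x, hx, hxc⟩))

theorem map_eq_map_of_occurring {M : Type*} [Group M] {f g : FreeGroup A →* M} {w : FreeGroup A}
    (h : ∀ c, w ∉ avoiding c → f (of c) = g (of c)) : f w = g w := by
  obtain ⟨L, hLw, hL⟩ := exists_mk_eq_of_notMem_avoiding w
  suffices hmk : f (FreeGroup.mk L) = g (FreeGroup.mk L) by rwa [hLw] at hmk
  clear hLw
  induction L with
  | nil => rw [← FreeGroup.one_eq_mk, map_one, map_one]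
  | cons x L ih =>
    rw [List.forall_mem_cons] at hL
    rw [mk_cons_eq_mul, map_mul, map_mul, ih hL.2]
    cases x.2 <;> simp [h x.1 hL.1]

theorem exists_map_subtypeVal_eq {w : FreeGroup A} (P : A → Prop)
    (hP : ∀ c, w ∉ avoiding c → P c) :
    ∃ W : FreeGroup {c // P c}, map Subtype.val W = w ∧ len W ≤ len w := by
  classical
  let restrict : FreeGroup A →* FreeGroup {c // P c} :=
    FreeGroup.lift fun c => if h : P c then of ⟨c, h⟩ else 1
  refine ⟨restrict w, ?_, IsLengthBound.le_len (isLengthBound_len_comp restrict fun a => ?_) w⟩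
  · refine map_eq_map_of_occurring (f := (map Subtype.val).comp restrict)
      (g := MonoidHom.id _) fun c hc => ?_
    simp [restrict, hP c hc]
  · by_cases ha : P a
    · simp [restrict, ha, len_of]
    · simp [restrict, ha, len_one]

/-- The letter `c` occurs in every conjugate of `w`. -/
def IsEssential (c : A) (w : FreeGroup A) : Prop :=
  ∀ u, u * w * u⁻¹ ∉ avoiding c

theorem IsEssential.notMem_avoiding {c : A} {w : FreeGroup A} (h : IsEssential c w) :
    w ∉ avoiding c := by
  simpa using h 1

theorem IsEssential.conj {c : A} {w : FreeGroup A} (h : IsEssential c w) (u : FreeGroup A) :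
    IsEssential c (u * w * u⁻¹) := fun x hx => h (x * u) (by simpa [mul_assoc] using hx)

theorem map_mem_avoiding {j : A → A'} {c : A'} (h : ∀ a, j a ≠ c) (w : FreeGroup A) :
    map j w ∈ avoiding c :=
  map_mem_of_forall_of_mem (fun a => by simpa using of_mem_avoiding (h a)) w

theorem map_mem_avoiding_of_injective {j : A → A'} (hj : Function.Injective j) {c : A}
    {w : FreeGroup A} (h : w ∈ avoiding c) : map j w ∈ avoiding (j c) :=
  map_mem_of_mem_avoiding
    (fun a ha => by simpa using of_mem_avoiding fun hjac => ha (hj hjac)) h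

theorem IsEssential.of_map {j : A → A'} (hj : Function.Injective j) {c : A} {w : FreeGroup A}
    (h : IsEssential (j c) (map j w)) : IsEssential c w := fun u hu =>
  h (map j u) (by simpa using map_mem_avoiding_of_injective hj hu)

/-- Erasing `c` from a conjugate of `w` which avoids `c` changes nothing, so it turns `w` itself
into a conjugate of `w`. -/
theorem isEssential_of_minimal {c : A} {w : FreeGroup A}
    (hmin : ∀ u, len w ≤ len (u * w * u⁻¹)) (hc : w ∉ avoiding c) : IsEssential c w := by
  intro u hu
  have hlt : len (erase c w) < len w :=
    (isLengthBound_len_erase c).lt_len (by simp [erase_of_self, len_one]) hc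
  have hconj : erase c w = ((erase c u)⁻¹ * u) * w * ((erase c u)⁻¹ * u)⁻¹ := by
    have := erase_eq_self hu
    rw [map_mul, map_mul, map_inv] at this
    calc erase c w = (erase c u)⁻¹ * (erase c u * erase c w * (erase c u)⁻¹) * erase c u := by group
      _ = _ := by rw [this]; group
  exact hlt.not_ge (hconj ▸ hmin _)

theorem exists_minimal_conj (w : FreeGroup A) :
    ∃ u, len (u * w * u⁻¹) ≤ len w ∧
      ∀ v, len (u * w * u⁻¹) ≤ len (v * (u * w * u⁻¹) * v⁻¹) := by
  let f : FreeGroup A → ℕ := fun u => len (u * w * u⁻¹)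
  refine ⟨Function.argmin f, (Function.argmin_le f 1).trans_eq (by simp [f]), fun v => ?_⟩
  refine (Function.argmin_le f (v * Function.argmin f)).trans_eq ?_
  simp only [f, mul_inv_rev, mul_assoc]

open Classical in
/-- The exponent sum of the letter `c`, written multiplicatively. -/
noncomputable def expSum (c : A) : FreeGroup A →* Multiplicative ℤ :=
  FreeGroup.lift (Pi.mulSingle c (Multiplicative.ofAdd 1))

theorem expSum_of_self (c : A) : expSum c (of c) = Multiplicative.ofAdd 1 := by simp [expSum]

theorem expSum_of_ne {c z : A} (h : z ≠ c) : expSum c (of z) = 1 := by simp [expSum, h]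

theorem expSum_eq_one {c : A} {v : FreeGroup A} (hv : v ∈ avoiding c) : expSum c v = 1 :=
  Subgroup.mem_bot.1 (map_mem_of_mem_avoiding
    (fun _ hz => Subgroup.mem_bot.2 (expSum_of_ne hz)) hv)

theorem isEssential_of_expSum_ne_one {c : A} {w : FreeGroup A} (h : expSum c w ≠ 1) :
    IsEssential c w := fun u hu => h (by simpa using expSum_eq_one hu)

end FreeGroup

section OneRelatorGroup

open FreeGroup (of map)

universe u v

variable {A : Type u} {A' : Type v} {w : FreeGroup A}

/-- The group `⟨A ∣ w = 1⟩`. -/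
abbrev OneRelatorGroup (w : FreeGroup A) : Type u := PresentedGroup {w}

/-- The projection of the free group on `A` to `⟨A ∣ w = 1⟩`. -/
abbrev proj (w : FreeGroup A) : FreeGroup A →* OneRelatorGroup w := PresentedGroup.mk {w}

theorem proj_surjective (w : FreeGroup A) : Function.Surjective (proj w) :=
  PresentedGroup.mk_surjective _

theorem proj_self (w : FreeGroup A) : proj w w = 1 := PresentedGroup.one_of_mem rfl

section descend

variable {G : Type*} [Group G]

/-- The homomorphism on `⟨A ∣ w = 1⟩` induced by a homomorphism on the free group which kills
`w`. -/
def descend (f : FreeGroup A →* G) (hf : f w = 1) : OneRelatorGroup w →* G :=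
  QuotientGroup.lift _ f (Subgroup.normalClosure_le_normal (by simpa using hf))

theorem descend_proj (f : FreeGroup A →* G) (hf : f w = 1) (v : FreeGroup A) :
    descend f hf (proj w v) = f v := rfl

theorem map_eq_one_of_proj_eq_one {f : FreeGroup A →* G} (hf : f w = 1) {v : FreeGroup A}
    (hv : proj w v = 1) : f v = 1 := by
  rw [← descend_proj f hf, hv, map_one]

end descend

/-- The homomorphism `⟨A ∣ w = 1⟩ →* ⟨A' ∣ w' = 1⟩` induced by `f`. -/
def mapRelator (f : FreeGroup A →* FreeGroup A') {w' : FreeGroup A'} (hf : f w = w') :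
    OneRelatorGroup w →* OneRelatorGroup w' :=
  descend ((proj w').comp f) (hf ▸ proj_self (f w))

theorem mapRelator_proj (f : FreeGroup A →* FreeGroup A') {w' : FreeGroup A'} (hf : f w = w')
    (v : FreeGroup A) : mapRelator f hf (proj w v) = proj w' (f v) := rfl

theorem proj_map_eq_one (f : FreeGroup A →* FreeGroup A') {v : FreeGroup A} (hv : proj w v = 1) :
    proj (f w) (f v) = 1 := by
  rw [← mapRelator_proj f rfl, hv, map_one]

theorem proj_conj_self (w u : FreeGroup A) : proj (u * w * u⁻¹) w = 1 := by
  have h := proj_self (u * w * u⁻¹)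
  rwa [map_mul, map_mul, map_inv, conj_eq_one_iff] at h

/-- The letters other than `c` freely generate their span in `⟨A ∣ w = 1⟩`. -/
def FreeAway (c : A) (w : FreeGroup A) : Prop :=
  ∀ v ∈ avoiding c, proj w v = 1 → v = 1

theorem FreeAway.injective_proj_comp_map {c : A} (h : FreeAway c w) {Y : Type*} {j : Y → A}
    (hj : Function.Injective j) (hc : ∀ y, j y ≠ c) :
    Function.Injective ((proj w).comp (map j)) := by
  rw [injective_iff_map_eq_one]
  intro x hx
  have h1 := h _ (map_mem_avoiding hc x) hx
  exact (map_eq_one_iff _ (FreeGroup.map_injective hj)).1 h1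

/-- Every element of finite order of `⟨A ∣ w = 1⟩` is conjugate to the image of an element of the
centralizer of `w` in the free group. Unlike conjugacy to a power of the root of `w`, this is
visibly preserved by homomorphisms of free groups. -/
def TorsionFromCentralizer (w : FreeGroup A) : Prop :=
  ∀ g : OneRelatorGroup w, IsOfFinOrder g → ∃ s, Commute s w ∧ IsConj (proj w s) g

theorem TorsionFromCentralizer.exists_map (h : TorsionFromCentralizer w)
    (f : FreeGroup A →* FreeGroup A') {w' : FreeGroup A'} (hf : f w = w')
    {x : OneRelatorGroup w} (hx : IsOfFinOrder x) :
    ∃ s, Commute s w' ∧ IsConj (proj w' s) (mapRelator f hf x) := by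
  obtain ⟨s, hs, hsx⟩ := h x hx
  exact ⟨f s, hf ▸ hs.map f, (mapRelator f hf).map_isConj hsx⟩

theorem TorsionFromCentralizer.of_mulEquiv (e : FreeGroup A ≃* FreeGroup A')
    (h : TorsionFromCentralizer (e w)) : TorsionFromCentralizer w := by
  intro g hg
  obtain ⟨v, rfl⟩ := proj_surjective w g
  have key : ∃ s, Commute s w ∧ IsConj (proj w s) (proj w (e.symm (e v))) :=
    h.exists_map e.symm.toMonoidHom (by simp)
      ((mapRelator e.toMonoidHom (w' := e w) rfl).isOfFinOrder hg)
  rwa [e.symm_apply_apply] at key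

/-- The Freiheitssatz for the relator `w`, together with the description of the torsion of
`⟨A ∣ w = 1⟩`. -/
structure IsTame (w : FreeGroup A) : Prop where
  freeAway : ∀ c, IsEssential c w → FreeAway c w
  torsion : TorsionFromCentralizer w

theorem isTame_one : IsTame (1 : FreeGroup A) where
  freeAway c hc := absurd (one_mem _) hc.notMem_avoiding
  torsion g hg := by
    obtain ⟨v, rfl⟩ := proj_surjective 1 g
    exact ⟨v, Commute.one_right v, IsConj.refl _⟩

theorem IsTame.of_conj {u : FreeGroup A} (h : IsTame (u * w * u⁻¹)) : IsTame w where
  freeAway c hc v hv hvw := h.freeAway c (hc.conj u) v hv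
    (map_eq_one_of_proj_eq_one (proj_conj_self w u) hvw)
  torsion := .of_mulEquiv (MulAut.conj u) (by simpa using h.torsion)

theorem IsTame.of_equiv (e : A ≃ A') (h : IsTame (map e w)) : IsTame w where
  freeAway c hc v hv hvw := by
    have hess : IsEssential (e c) (map e w) :=
      .of_map e.symm.injective (by simpa [FreeGroup.map.comp] using hc)
    have h1 := h.freeAway _ hess _ (map_mem_avoiding_of_injective e.injective hv)
      (proj_map_eq_one _ hvw)
    exact (map_eq_one_iff _ (FreeGroup.map_injective e.injective)).1 h1
  torsion := .of_mulEquiv (FreeGroup.freeGroupCongr e) h.torsion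

end OneRelatorGroup

section Rewriting

open FreeGroup (of map)
open scoped SemidirectProduct

universe u

variable {B : Type u}

/-- The Reidemeister–Schreier letters: `(b, i)` stands for `t ^ i * b * t ^ (-i)`, where the stable
letter `t` is `none`. -/
noncomputable def unroll : FreeGroup (B × ℤ) →* FreeGroup (Option B) :=
  FreeGroup.lift fun p => of none ^ p.2 * of (some p.1) * (of none ^ p.2)⁻¹

theorem unroll_of (b : B) (i : ℤ) :
    unroll (of (b, i)) = of none ^ i * of (some b) * (of none ^ i)⁻¹ := by simp [unroll]

variable (B) in
/-- The action of `ℤ` on the Reidemeister–Schreier letters by translation of the exponent, which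
is conjugation by powers of the stable letter. -/
def shiftHom : Multiplicative ℤ →* MulAut (FreeGroup (B × ℤ)) where
  toFun n := FreeGroup.freeGroupCongr ((Equiv.refl B).prodCongr (Equiv.addRight n.toAdd))
  map_one' := by
    refine MulEquiv.toMonoidHom_injective (FreeGroup.ext_hom _ _ fun p => ?_)
    simp
  map_mul' n k := by
    refine MulEquiv.toMonoidHom_injective (FreeGroup.ext_hom _ _ fun ⟨b, i⟩ => ?_)
    simp [add_assoc, add_comm k.toAdd]

theorem shiftHom_of (n : Multiplicative ℤ) (b : B) (i : ℤ) :
    shiftHom B n (of (b, i)) = of (b, i + n.toAdd) := by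
  simp [shiftHom]

theorem len_shiftHom (n : Multiplicative ℤ) (x : FreeGroup (B × ℤ)) :
    len (shiftHom B n x) = len x := by
  have hle (n : Multiplicative ℤ) (x) : len (shiftHom B n x) ≤ len x :=
    (isLengthBound_len_comp (shiftHom B n).toMonoidHom fun ⟨b, i⟩ => by
      simp [shiftHom_of, len_of]).le_len x
  refine (hle n x).antisymm ?_
  simpa using hle n⁻¹ (shiftHom B n x)

/-- The rewriting of words in `t = none` and `B` as a word in the Reidemeister–Schreier letters
followed by a power of `t`. -/
def roll : FreeGroup (Option B) →* FreeGroup (B × ℤ) ⋊[shiftHom B] Multiplicative ℤ :=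
  FreeGroup.lift fun o => o.elim (SemidirectProduct.inr (Multiplicative.ofAdd 1))
    fun b => SemidirectProduct.inl (of (b, 0))

theorem roll_of_some (b : B) : roll (of (some b)) = SemidirectProduct.inl (of (b, 0)) := by
  simp [roll]

theorem roll_of_none_zpow (n : ℤ) :
    roll (of (none : Option B) ^ n) = SemidirectProduct.inr (Multiplicative.ofAdd n) := by
  rw [map_zpow, roll, FreeGroup.lift_apply_of, Option.elim_none, ← map_zpow, ← ofAdd_zsmul]
  simp

theorem roll_of_none :
    roll (of (none : Option B)) = SemidirectProduct.inr (Multiplicative.ofAdd 1) := by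
  simpa using roll_of_none_zpow (B := B) 1

theorem unroll_left_roll_mul (v : FreeGroup (Option B)) :
    unroll (roll v).left * of none ^ (roll v).right.toAdd = v := by
  let evaluate : FreeGroup (B × ℤ) ⋊[shiftHom B] Multiplicative ℤ →* FreeGroup (Option B) :=
    SemidirectProduct.lift unroll (zpowersHom _ (of none)) fun n => by
      ext ⟨b, i⟩
      simp only [MonoidHom.comp_apply, MulEquiv.coe_toMonoidHom, shiftHom_of, unroll_of,
        MulAut.conj_apply, zpowersHom_apply, add_comm i, zpow_add]
      group
  have hid : evaluate.comp roll = MonoidHom.id _ := by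
    ext (_ | b)
    · simp [roll_of_none, evaluate]
    · simp [roll_of_some, evaluate, unroll_of]
  simpa [evaluate, SemidirectProduct.lift] using DFunLike.congr_fun hid v

theorem unroll_left_roll {v : FreeGroup (Option B)} (hv : (roll v).right = 1) :
    unroll (roll v).left = v := by
  simpa [hv] using unroll_left_roll_mul v

theorem right_roll_unroll (x : FreeGroup (B × ℤ)) : (roll (unroll x)).right = 1 := by
  have h : (SemidirectProduct.rightHom.comp roll).comp unroll = (1 : FreeGroup (B × ℤ) →* _) := by
    ext ⟨b, i⟩
    simp [unroll_of, roll_of_none, roll_of_some]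
  exact DFunLike.congr_fun h x

theorem isLengthBound_len_left {A : Type*}
    (τ : FreeGroup A →* FreeGroup (B × ℤ) ⋊[shiftHom B] Multiplicative ℤ)
    (hτ : ∀ a, len (τ (of a)).left ≤ 1) : IsLengthBound fun w => len (τ w).left where
  map_one := by simp [len_one]
  map_mul_le v w := by
    rw [map_mul, SemidirectProduct.mul_left]
    exact (len_mul_le _ _).trans_eq (by rw [len_shiftHom])
  map_inv w := by rw [map_inv, SemidirectProduct.inv_left, len_shiftHom, len_inv]
  map_of_le := hτ

end Rewriting

section Window

open FreeGroup (of map)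
open Set (Icc Ico)

universe u

variable {B : Type u} {a : B} {m M : ℤ}

/-- The Reidemeister–Schreier letters whose exponent lies in `S` if the underlying letter is `a`;
the exponents of the other letters are unrestricted. For an interval `S` these are the generators of
the base group and of the associated subgroups in Moldavanskii's description of a one-relator
group as an HNN extension. -/
abbrev Window (a : B) (S : Set ℤ) : Type u := {p : B × ℤ // p.1 = a → p.2 ∈ S}

/-- The homomorphism `unroll`, restricted to the letters of a window. -/
noncomputable def unrollWindow (a : B) (S : Set ℤ) :
    FreeGroup (Window a S) →* FreeGroup (Option B) :=
  unroll.comp (map Subtype.val)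

theorem unrollWindow_of {S : Set ℤ} (b : B) (i : ℤ) (h : b = a → i ∈ S) :
    unrollWindow a S (of ⟨(b, i), h⟩) = of none ^ i * of (some b) * (of none ^ i)⁻¹ := by
  simp [unrollWindow, unroll_of]

/-- The inclusion of the letters of the associated subgroup into those of the base group. -/
def windowIncl (y : Window a (Ico m M)) : Window a (Icc m M) :=
  ⟨y.1, fun h => Set.Ico_subset_Icc_self (y.2 h)⟩

/-- The effect of conjugation by the stable letter on the letters of the associated subgroup. -/
def windowShift (y : Window a (Ico m M)) : Window a (Icc m M) :=
  ⟨(y.1.1, y.1.2 + 1), fun h => Set.mem_Icc.2 ⟨by have := (y.2 h).1; lia, (y.2 h).2⟩⟩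

theorem windowIncl_injective : Function.Injective (windowIncl : Window a (Ico m M) → _) :=
  fun _ _ h => Subtype.ext (by simpa [windowIncl] using h)

theorem windowShift_injective : Function.Injective (windowShift : Window a (Ico m M) → _) := by
  rintro ⟨⟨b, i⟩, _⟩ ⟨⟨b', i'⟩, _⟩ h
  simpa [windowShift, Subtype.ext_iff] using h

/-- The letter `(b, m)`, where `m` is the bottom of the window. -/
def bottom (a : B) (hm : m ≤ M) (b : B) : Window a (Icc m M) :=
  ⟨(b, m), fun _ => Set.left_mem_Icc.2 hm⟩

/-- The letter `(a, M)`, where `M` is the top of the window. -/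
def top (a : B) (hm : m ≤ M) : Window a (Icc m M) :=
  ⟨(a, M), fun _ => Set.right_mem_Icc.2 hm⟩

theorem bottom_injective (hm : m ≤ M) : Function.Injective (bottom a hm) :=
  fun _ _ h => congrArg (fun x => x.1.1) h

theorem windowIncl_ne_top (hm : m ≤ M) (y : Window a (Ico m M)) : windowIncl y ≠ top a hm := by
  obtain ⟨⟨b, i⟩, hi⟩ := y
  rintro h
  obtain ⟨rfl, rfl⟩ : b = a ∧ i = M := by simpa [windowIncl, top] using h
  exact (hi rfl).2.false

theorem windowShift_ne_bottom (hm : m ≤ M) (y : Window a (Ico m M)) :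
    windowShift y ≠ bottom a hm a := by
  obtain ⟨⟨b, i⟩, hi⟩ := y
  rintro h
  obtain ⟨rfl, rfl⟩ : b = a ∧ i + 1 = m := by simpa [windowShift, bottom, Subtype.ext_iff] using h
  have := (hi rfl).1
  lia

/-- If `s` conjugates each letter of the associated subgroup to its shift, then the letters
`s⁻ⁱ (b, i) sⁱ` do not depend on `i`. -/
theorem zpow_mul_map_window {P : Type*} [Group P] (hm : m ≤ M) {s : P}
    {f : FreeGroup (Window a (Icc m M)) →* P}
    (hs : ∀ y, s * f (of (windowIncl y)) * s⁻¹ = f (of (windowShift y))) (b : B) (i : ℤ)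
    (h : b = a → i ∈ Icc m M) :
    s ^ (-i) * f (of ⟨(b, i), h⟩) * s ^ i = s ^ (-m) * f (of (bottom a hm b)) * s ^ m := by
  have hstep (i : ℤ) (hi : b = a → i ∈ Ico m M) :
      s ^ (-(i + 1)) * f (of (windowShift ⟨(b, i), hi⟩)) * s ^ (i + 1) =
        s ^ (-i) * f (of (windowIncl ⟨(b, i), hi⟩)) * s ^ i := by
    rw [← hs]
    group
  rcases le_total m i with hi | hi
  · induction i, hi using Int.leInduction with
    | base => rfl
    | succ i hi ih =>
      exact (hstep i fun hb => ⟨hi, (h hb).2⟩).trans (ih fun hb => ⟨hi, by have := (h hb).2; lia⟩)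
  · induction i, hi using Int.leInductionDown with
    | base => rfl
    | pred i hi ih =>
      have hb : b ≠ a := fun hb => by have := (h hb).1; lia
      have := hstep (i - 1) fun h => absurd h hb
      simp only [windowShift, windowIncl, sub_add_cancel] at this
      exact this.symm.trans (ih fun h => absurd h hb)

theorem exists_comp_unrollWindow_eq {P : Type*} [Group P] (hm : m ≤ M) {s : P}
    {f : FreeGroup (Window a (Icc m M)) →* P}
    (hs : ∀ y, s * f (of (windowIncl y)) * s⁻¹ = f (of (windowShift y))) :
    ∃ Φ : FreeGroup (Option B) →* P, Φ (of none) = s ∧ Φ.comp (unrollWindow a (Icc m M)) = f := by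
  let Φ : FreeGroup (Option B) →* P := FreeGroup.lift fun o =>
    o.elim s fun b => s ^ (-m) * f (of (bottom a hm b)) * s ^ m
  refine ⟨Φ, by simp [Φ], ?_⟩
  ext ⟨⟨b, i⟩, h⟩
  rw [MonoidHom.comp_apply, unrollWindow_of, map_mul, map_mul, map_inv, map_zpow]
  simp only [Φ, FreeGroup.lift_apply_of, Option.elim]
  rw [← zpow_mul_map_window hm hs b i h]
  group

theorem hom_ext_of_unrollWindow {P : Type*} [Group P] (hm : m ≤ M)
    {f g : FreeGroup (Option B) →* P} (hnone : f (of none) = g (of none))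
    (h : f.comp (unrollWindow a (Icc m M)) = g.comp (unrollWindow a (Icc m M))) : f = g := by
  ext (_ | b)
  · exact hnone
  · have hb := DFunLike.congr_fun h (of (bottom a hm b))
    simpa [bottom, unrollWindow_of, hnone] using hb

theorem unrollWindow_map_windowShift (x : FreeGroup (Window a (Ico m M))) :
    of none * unrollWindow a (Icc m M) (map windowIncl x) * (of none)⁻¹ =
      unrollWindow a (Icc m M) (map windowShift x) := by
  have h : (MulAut.conj (of none)).toMonoidHom.comp
      ((unrollWindow a (Icc m M)).comp (map windowIncl)) =
        (unrollWindow a (Icc m M)).comp (map windowShift) := by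
    ext ⟨⟨b, i⟩, hi⟩
    simp only [MonoidHom.comp_apply, map.of, MulEquiv.coe_toMonoidHom, MulAut.conj_apply,
      windowIncl, windowShift, unrollWindow_of, add_comm i, zpow_one_add]
    group
  exact DFunLike.congr_fun h x

end Window

section Moldavanskii

open FreeGroup (of map)
open Set (Icc Ico)

universe u

section rangeEquiv

variable {H K Q : Type*} [Group H] [Group K] [Group Q] {f g : K →* H}

/-- The isomorphism between the images of two embeddings of the same group. -/
noncomputable def rangeEquiv (hf : Function.Injective f) (hg : Function.Injective g) :
    f.range ≃* g.range :=
  (MonoidHom.ofInjective hf).symm.trans (MonoidHom.ofInjective hg)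

variable (hf : Function.Injective f) (hg : Function.Injective g)

theorem rangeEquiv_rangeRestrict (x : K) :
    rangeEquiv hf hg (f.rangeRestrict x) = g.rangeRestrict x :=
  congrArg (MonoidHom.ofInjective hg) ((MonoidHom.ofInjective hf).symm_apply_apply x)

theorem t_mul_of_mul_t_inv_rangeEquiv (x : K) :
    (HNNExtension.t * HNNExtension.of (f x) * HNNExtension.t⁻¹ :
      HNNExtension H f.range g.range (rangeEquiv hf hg)) = HNNExtension.of (g x) := by
  have h := HNNExtension.equiv_eq_conj (φ := rangeEquiv hf hg) (f.rangeRestrict x)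
  rw [rangeEquiv_rangeRestrict] at h
  exact h.symm

/-- The homomorphism on an HNN extension with stable letter `t * f x * t⁻¹ = g x` induced by a
homomorphism `j` on the base group and an image `q` of the stable letter. -/
noncomputable def hnnLift (j : H →* Q) (q : Q) (h : ∀ x, q * j (f x) * q⁻¹ = j (g x)) :
    HNNExtension H f.range g.range (rangeEquiv hf hg) →* Q :=
  HNNExtension.lift j q fun y => by
    obtain ⟨x, rfl⟩ := f.rangeRestrict_surjective y
    rw [rangeEquiv_rangeRestrict, MonoidHom.coe_rangeRestrict, MonoidHom.coe_rangeRestrict, ← h,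
      inv_mul_cancel_right]

end rangeEquiv

variable {B : Type u} {a : B} {m M : ℤ}

/-- Moldavanskii's theorem. -/
theorem exists_hnn_comp_eq_id (hm : m ≤ M) {W : FreeGroup (Window a (Icc m M))}
    (hbot : FreeAway (bottom a hm a) W) (htop : FreeAway (top a hm) W) :
    ∃ (S T : Subgroup (OneRelatorGroup W)) (φ : S ≃* T)
      (toHNN : OneRelatorGroup (unrollWindow a (Icc m M) W) →* HNNExtension _ S T φ)
      (ofHNN : HNNExtension _ S T φ →* OneRelatorGroup (unrollWindow a (Icc m M) W)),
      ofHNN.comp toHNN = MonoidHom.id _ ∧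
      toHNN.comp (mapRelator (unrollWindow a (Icc m M)) rfl) = HNNExtension.of := by
  let uW := unrollWindow a (Icc m M)
  have hf := htop.injective_proj_comp_map windowIncl_injective (windowIncl_ne_top hm)
  have hg := hbot.injective_proj_comp_map windowShift_injective (windowShift_ne_bottom hm)
  let ofW : FreeGroup (Window a (Icc m M)) →* HNNExtension _ _ _ (rangeEquiv hf hg) :=
    HNNExtension.of.comp (proj W)
  have hconj (y) : HNNExtension.t * ofW (of (windowIncl y)) * HNNExtension.t⁻¹ =
      ofW (of (windowShift y)) := by
    simpa [ofW] using t_mul_of_mul_t_inv_rangeEquiv hf hg (of y)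
  obtain ⟨Φ, hΦt, hΦ⟩ := exists_comp_unrollWindow_eq hm hconj
  let toHNN : OneRelatorGroup (uW W) →* HNNExtension _ _ _ (rangeEquiv hf hg) := descend Φ <| by
    rw [← MonoidHom.comp_apply, hΦ, MonoidHom.comp_apply, proj_self, map_one]
  let ofHNN : HNNExtension _ _ _ (rangeEquiv hf hg) →* OneRelatorGroup (uW W) :=
    hnnLift hf hg (mapRelator uW rfl) (proj (uW W) (of none)) fun x => by
      simp only [MonoidHom.comp_apply, mapRelator_proj, ← map_mul, ← map_inv]
      rw [unrollWindow_map_windowShift]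
  have htoHNN : toHNN.comp (mapRelator uW rfl) = HNNExtension.of :=
    PresentedGroup.ext fun x => DFunLike.congr_fun hΦ (of x)
  refine ⟨_, _, rangeEquiv hf hg, toHNN, ofHNN, ?_, htoHNN⟩
  have hid : (ofHNN.comp toHNN).comp (proj (uW W)) = proj (uW W) := by
    refine hom_ext_of_unrollWindow (a := a) hm ?_ ?_
    · simp [toHNN, ofHNN, descend_proj, hΦt, hnnLift]
    · ext x
      refine (congrArg ofHNN (DFunLike.congr_fun hΦ (of x))).trans ?_
      simp [ofHNN, ofW, hnnLift, mapRelator_proj, uW]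
  exact PresentedGroup.ext fun o => DFunLike.congr_fun hid (of o)

theorem mapRelator_unrollWindow_injective (hm : m ≤ M) {W : FreeGroup (Window a (Icc m M))}
    (hbot : FreeAway (bottom a hm a) W) (htop : FreeAway (top a hm) W) :
    Function.Injective
      (mapRelator (unrollWindow a (Icc m M)) rfl : OneRelatorGroup W →* OneRelatorGroup _) := by
  obtain ⟨_, _, φ, toHNN, _, -, h⟩ := exists_hnn_comp_eq_id hm hbot htop
  have hinj := HNNExtension.of_injective (φ := φ)
  rw [← h] at hinj
  exact Function.Injective.of_comp (f := toHNN) hinj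

theorem exists_isConj_mapRelator_unrollWindow (hm : m ≤ M) {W : FreeGroup (Window a (Icc m M))}
    (hbot : FreeAway (bottom a hm a) W) (htop : FreeAway (top a hm) W)
    {g : OneRelatorGroup (unrollWindow a (Icc m M) W)} (hg : IsOfFinOrder g) :
    ∃ x : OneRelatorGroup W, IsConj (mapRelator (unrollWindow a (Icc m M)) rfl x) g := by
  obtain ⟨_, _, φ, toHNN, ofHNN, hid, h⟩ := exists_hnn_comp_eq_id hm hbot htop
  obtain ⟨x, hx⟩ := exists_isConj_hnn_of (toHNN.isOfFinOrder hg)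
  refine ⟨x, ?_⟩
  have hid (y) : ofHNN (toHNN y) = y := DFunLike.congr_fun hid y
  have hconj := ofHNN.map_isConj hx
  rwa [← h, MonoidHom.comp_apply, hid, hid] at hconj

theorem TorsionFromCentralizer.unrollWindow (hm : m ≤ M) {W : FreeGroup (Window a (Icc m M))}
    (hbot : FreeAway (bottom a hm a) W) (htop : FreeAway (top a hm) W)
    (hW : TorsionFromCentralizer W) :
    TorsionFromCentralizer (OneRelator.unrollWindow a (Icc m M) W) := by
  intro g hg
  obtain ⟨x, hx⟩ := exists_isConj_mapRelator_unrollWindow hm hbot htop hg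
  have hfin : IsOfFinOrder x :=
    (mapRelator_unrollWindow_injective hm hbot htop).isOfFinOrder_iff.1 (hx.symm.isOfFinOrder hg)
  obtain ⟨s, hs, hsx⟩ := hW.exists_map _ rfl hfin
  exact ⟨s, hs, hsx.trans hx⟩

end Moldavanskii

section Step

open FreeGroup (of map)
open Set (Icc Ico)

universe u

variable {B : Type u} {a : B} {m M : ℤ}

section Window

variable {hm : m ≤ M} {W : FreeGroup (Window a (Icc m M))}

theorem proj_eq_one_of_proj_unrollWindow_eq_one (hbot : FreeAway (bottom a hm a) W)
    (htop : FreeAway (top a hm) W) {x : FreeGroup (Window a (Icc m M))}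
    (hx : proj (unrollWindow a (Icc m M) W) (unrollWindow a (Icc m M) x) = 1) :
    proj W x = 1 :=
  (map_eq_one_iff _ (mapRelator_unrollWindow_injective hm hbot htop)).1 hx

theorem unrollWindow_map_bottom (hm : m ≤ M) (x : FreeGroup B) :
    unrollWindow a (Icc m M) (map (bottom a hm) x) =
      of none ^ m * map some x * (of none ^ m)⁻¹ := by
  have h : (unrollWindow a (Icc m M)).comp (map (bottom a hm)) =
      (MulAut.conj (of none ^ m)).toMonoidHom.comp (map some) := by
    ext b
    simp only [MonoidHom.comp_apply, map.of, bottom, unrollWindow_of, MulEquiv.coe_toMonoidHom,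
      MulAut.conj_apply]
  exact DFunLike.congr_fun h x

theorem FreeAway.none_unrollWindow (hbot : FreeAway (bottom a hm a) W)
    (htop : FreeAway (top a hm) W) {c : Window a (Icc m M)} (hc : FreeAway c W)
    (hcm : c.1.2 ≠ m) : FreeAway none (unrollWindow a (Icc m M) W) := by
  intro v hv hvw
  obtain ⟨v, rfl⟩ : v ∈ (map some).range := map_mem_of_mem_avoiding (f := MonoidHom.id _)
    (fun o ho => by
      obtain ⟨b, rfl⟩ := Option.ne_none_iff_exists'.1 ho
      exact ⟨of b, map.of⟩) hv
  have hproj : proj W (map (bottom a hm) v) = 1 := by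
    refine proj_eq_one_of_proj_unrollWindow_eq_one hbot htop ?_
    rw [unrollWindow_map_bottom, map_mul, map_mul, map_inv, hvw, mul_one, mul_inv_cancel]
  have hinj := hc.injective_proj_comp_map (bottom_injective hm) fun b hb => hcm (by
    rw [← hb, bottom])
  rw [(map_eq_one_iff _ hinj).1 hproj, map_one]

open Classical in
/-- The endomorphism `erase (some a)` in terms of the Reidemeister–Schreier letters. -/
noncomputable def eraseWindow (a : B) (S : Set ℤ) : FreeGroup (B × ℤ) →* FreeGroup (Window a S) :=
  FreeGroup.lift fun p => if h : p.1 = a then 1 else of ⟨p, fun h' => absurd h' h⟩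

theorem unrollWindow_eraseWindow (S : Set ℤ) (x : FreeGroup (B × ℤ)) :
    unrollWindow a S (eraseWindow a S x) = erase (some a) (unroll x) := by
  have h : (unrollWindow a S).comp (eraseWindow a S) = (erase (some a)).comp unroll := by
    ext ⟨b, i⟩
    by_cases hb : b = a
    · simp [eraseWindow, unroll_of, hb, erase_of_self]
    · simp [eraseWindow, unroll_of, hb, erase_of_ne, unrollWindow_of]
  exact DFunLike.congr_fun h x

theorem eraseWindow_mem_avoiding {S : Set ℤ} {c : Window a S} (hc : c.1.1 = a)
    (x : FreeGroup (B × ℤ)) : eraseWindow a S x ∈ avoiding c := by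
  refine map_mem_of_forall_of_mem (fun p => ?_) x
  by_cases hp : p.1 = a
  · simp [eraseWindow, hp, one_mem]
  · simpa [eraseWindow, hp] using of_mem_avoiding fun h => hp (by rw [← h] at hc; exact hc)

theorem FreeAway.some_unrollWindow (hbot : FreeAway (bottom a hm a) W)
    (htop : FreeAway (top a hm) W) : FreeAway (some a) (unrollWindow a (Icc m M) W) := by
  intro v hv hvw
  have hright : (roll v).right = 1 :=
    map_eq_one_of_proj_eq_one (f := SemidirectProduct.rightHom.comp roll)
      (right_roll_unroll (map Subtype.val W)) hvw
  have hv_eq : unrollWindow a (Icc m M) (eraseWindow a (Icc m M) (roll v).left) = v := by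
    rw [unrollWindow_eraseWindow, unroll_left_roll hright, erase_eq_self hv]
  have hone : eraseWindow a (Icc m M) (roll v).left = 1 :=
    hbot _ (eraseWindow_mem_avoiding rfl _)
      (proj_eq_one_of_proj_unrollWindow_eq_one hbot htop (by rwa [hv_eq]))
  rw [← hv_eq, hone, map_one]

end Window

theorem exists_window {w : FreeGroup (B × ℤ)} (hmin : ∀ u, len w ≤ len (u * w * u⁻¹))
    (ih : ∀ (X : Type u) (v : FreeGroup X), len v ≤ len w → IsTame v)
    (ha : ∃ i, w ∉ avoiding (a, i)) :
    ∃ (m M : ℤ) (hm : m ≤ M) (W : FreeGroup (Window a (Icc m M))),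
      map Subtype.val W = w ∧ TorsionFromCentralizer W ∧ FreeAway (bottom a hm a) W ∧
      FreeAway (top a hm) W ∧ ∀ c, w ∉ avoiding c.1 → FreeAway c W := by
  have hfin : {i | w ∉ avoiding (a, i)}.Finite :=
    (finite_setOf_notMem_avoiding w).preimage (Prod.mk_right_injective a).injOn
  obtain ⟨m, hm, hmle⟩ := Set.exists_min_image _ id hfin ha
  obtain ⟨M, hM, hMle⟩ := Set.exists_max_image _ id hfin ha
  have hwin (p : B × ℤ) (hp : w ∉ avoiding p) (hpa : p.1 = a) : p.2 ∈ Icc m M := by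
    obtain ⟨b, i⟩ := p
    subst hpa
    exact ⟨hmle i hp, hMle i hp⟩
  obtain ⟨W, hWw, hlen⟩ := exists_map_subtypeVal_eq _ hwin
  have hW : IsTame W := ih _ W hlen
  have hfree (c : Window a (Icc m M)) (hc : w ∉ avoiding c.1) : FreeAway c W := by
    have hess := isEssential_of_minimal hmin hc
    rw [← hWw] at hess
    exact hW.freeAway c (hess.of_map Subtype.val_injective)
  have hmM : m ≤ M := hmle M hM
  exact ⟨m, M, hmM, W, hWw, hW.torsion, hfree (bottom a hmM a) hm, hfree (top a hmM) hM, hfree⟩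

/-- If all letters of `w` had the same exponent `i`, then conjugation by `t ^ (-i)` would remove the
stable letter `t` from `unroll w`. -/
theorem exists_ne_exponent {w : FreeGroup (B × ℤ)} (h : IsEssential none (unroll w)) (i : ℤ) :
    ∃ b j, w ∉ avoiding (b, j) ∧ j ≠ i := by
  by_contra! hi
  refine h (of none ^ i)⁻¹ ?_
  have heq : (of none ^ i)⁻¹ * unroll w * ((of none ^ i)⁻¹)⁻¹ = map (fun p => some p.1) w :=
    map_eq_map_of_occurring (f := (MulAut.conj (of none ^ i)⁻¹).toMonoidHom.comp unroll)
      fun ⟨b, j⟩ hc => by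
        obtain rfl := hi b j hc
        simp only [MonoidHom.comp_apply, MulEquiv.coe_toMonoidHom, MulAut.conj_apply, unroll_of,
          map.of]
        group
  rw [heq]
  exact map_mem_avoiding (fun _ => Option.some_ne_none _) w

theorem exists_notMem_avoiding_of_isEssential_some {w : FreeGroup (B × ℤ)}
    (h : IsEssential (some a) (unroll w)) : ∃ i, w ∉ avoiding (a, i) := by
  by_contra! ha
  refine h.notMem_avoiding ?_
  have heq : erase (some a) (unroll w) = unroll w :=
    map_eq_map_of_occurring (f := (erase (some a)).comp unroll) fun ⟨b, i⟩ hc => by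
      have hb : b ≠ a := by
        rintro rfl
        exact hc (ha i)
      simp [unroll_of, erase_of_ne, hb]
  exact heq ▸ erase_mem_avoiding _ _

theorem exists_notMem_avoiding_of_ne_one {A : Type*} {w : FreeGroup A} (hw : w ≠ 1) :
    ∃ c, w ∉ avoiding c := by
  by_contra! h
  exact hw (map_eq_map_of_occurring (f := MonoidHom.id _) (g := 1) fun c hc => absurd (h c) hc)

theorem isTame_unroll_of_minimal {w : FreeGroup (B × ℤ)}
    (hmin : ∀ u, len w ≤ len (u * w * u⁻¹))
    (ih : ∀ (X : Type u) (v : FreeGroup X), len v ≤ len w → IsTame v) : IsTame (unroll w) where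
  freeAway := by
    rintro (_ | a) hc
    · obtain ⟨a, i, ha, -⟩ := exists_ne_exponent hc 0
      obtain ⟨m, M, hm, W, rfl, -, hbot, htop, hfree⟩ := exists_window hmin ih ⟨i, ha⟩
      obtain ⟨b, j, hb, hj⟩ := exists_ne_exponent hc m
      have hwin : b = a → j ∈ Icc m M := by
        by_contra hne
        exact hb (map_mem_avoiding (fun c hc => hne (by have := c.2; rwa [hc] at this)) W)
      exact hbot.none_unrollWindow htop (hfree ⟨(b, j), hwin⟩ hb) hj
    · obtain ⟨m, M, hm, W, rfl, -, hbot, htop, -⟩ :=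
        exists_window hmin ih (exists_notMem_avoiding_of_isEssential_some hc)
      exact hbot.some_unrollWindow htop
  torsion := by
    rcases eq_or_ne w 1 with rfl | hw
    · rw [map_one]
      exact isTame_one.torsion
    · obtain ⟨⟨a, i⟩, ha⟩ := exists_notMem_avoiding_of_ne_one hw
      obtain ⟨m, M, hm, W, rfl, htor, hbot, htop, -⟩ := exists_window hmin ih ⟨i, ha⟩
      exact htor.unrollWindow hm hbot htop

theorem isTame_unroll {w : FreeGroup (B × ℤ)}
    (ih : ∀ (X : Type u) (v : FreeGroup X), len v ≤ len w → IsTame v) : IsTame (unroll w) := by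
  obtain ⟨u, hu, hmin⟩ := exists_minimal_conj w
  refine .of_conj (u := unroll u) ?_
  rw [← map_inv, ← map_mul, ← map_mul]
  exact isTame_unroll_of_minimal hmin fun X v hv => ih X v (hv.trans hu)

theorem isTame_map_of_roll {A : Type*} {w : FreeGroup A}
    (ψ : FreeGroup A →* FreeGroup (Option B)) {b : A} (hbw : w ∉ avoiding b)
    (hb : (roll (ψ (of b))).left = 1) (hψ : ∀ z, len (roll (ψ (of z))).left ≤ 1)
    (hright : (roll (ψ w)).right = 1)
    (ih : ∀ (X : Type u) (v : FreeGroup X), len v < len w → IsTame v) : IsTame (ψ w) := by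
  have hlt : len (roll (ψ w)).left < len w :=
    (isLengthBound_len_left (roll.comp ψ) hψ).lt_len (by simp [hb, len_one]) hbw
  rw [← unroll_left_roll hright]
  exact isTame_unroll fun X v hv => ih X v (hv.trans_lt hlt)

end Step

section Substitution

open FreeGroup (of map)

universe u

variable {A B : Type u}

theorem right_roll (v : FreeGroup (Option B)) : (roll v).right = expSum none v := by
  have h : SemidirectProduct.rightHom.comp roll = expSum (none : Option B) := by
    ext (_ | b)
    · simp [roll_of_none, expSum_of_self]
    · simp [roll_of_some, expSum_of_ne]
  exact DFunLike.congr_fun h v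

theorem left_roll_of_none_zpow (n : ℤ) : (roll (of (none : Option B) ^ n)).left = 1 := by
  rw [roll_of_none_zpow, SemidirectProduct.left_inr]

theorem left_roll_of_some_mul_zpow (b : B) (n : ℤ) :
    (roll (of (some b) * of none ^ n)).left = of (b, 0) := by
  rw [map_mul, roll_of_none_zpow, roll_of_some]
  simp

theorem isTame_of_expSum_eq_one {w : FreeGroup A} {a : A} (ha : w ∉ avoiding a)
    (hw : expSum a w = 1)
    (ih : ∀ (X : Type u) (v : FreeGroup X), len v < len w → IsTame v) : IsTame w := by
  classical
  let e : A ≃ Option {b // b ≠ a} := (Equiv.optionSubtypeNe a).symm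
  have he_self : e a = none := Equiv.optionSubtypeNe_symm_self a
  have he_ne {z : A} (hz : z ≠ a) : e z = some ⟨z, hz⟩ := Equiv.optionSubtypeNe_symm_of_ne hz
  have hself : (roll (map e (of a))).left = 1 := by
    simpa [he_self] using left_roll_of_none_zpow (B := {b // b ≠ a}) 1
  have hexp : (expSum none).comp (map e) = expSum a := by
    ext z
    by_cases hz : z = a
    · simp [hz, he_self, expSum_of_self]
    · simp [he_ne hz, expSum_of_ne hz, expSum_of_ne]
  refine IsTame.of_equiv e (isTame_map_of_roll (map e) ha hself (fun z => ?_) ?_ ih)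
  · by_cases hz : z = a
    · rw [hz, hself, len_one]
      exact zero_le_one
    · simp [he_ne hz, roll_of_some, len_of]
  · exact (right_roll _).trans ((DFunLike.congr_fun hexp w).trans hw)

open Classical in
/-- Magnus' substitution `b = t ^ α`, `c = c' * t ^ (-β)`, where `t` is the new letter `none`. -/
noncomputable def magnusSubst (b c : A) (α β : ℤ) : FreeGroup A →* FreeGroup (Option A) :=
  FreeGroup.lift fun z => if z = b then of none ^ α else
    if z = c then of (some c) * of none ^ (-β) else of (some z)

section magnusSubst

variable {b c : A} {α β : ℤ}

theorem magnusSubst_of_left : magnusSubst b c α β (of b) = of none ^ α := by simp [magnusSubst]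

theorem magnusSubst_of_right (hcb : c ≠ b) :
    magnusSubst b c α β (of c) = of (some c) * of none ^ (-β) := by simp [magnusSubst, hcb]

theorem magnusSubst_of_ne {z : A} (hzb : z ≠ b) (hzc : z ≠ c) :
    magnusSubst b c α β (of z) = of (some z) := by simp [magnusSubst, hzb, hzc]

theorem expSum_none_magnusSubst (hcb : c ≠ b) (v : FreeGroup A) :
    expSum none (magnusSubst b c α β v) = expSum b v ^ α * expSum c v ^ (-β) := by
  have h : (expSum none).comp (magnusSubst b c α β) = expSum b ^ α * expSum c ^ (-β) := by
    ext z
    by_cases hzb : z = b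
    · simp [hzb, magnusSubst_of_left, expSum_of_self, expSum_of_ne hcb.symm]
    by_cases hzc : z = c
    · simp [hzc, magnusSubst_of_right hcb, expSum_of_self, expSum_of_ne hcb, expSum_of_ne]
    · simp [magnusSubst_of_ne hzb hzc, expSum_of_ne hzb, expSum_of_ne hzc, expSum_of_ne]
  exact DFunLike.congr_fun h v

theorem expSum_some_magnusSubst (hcb : c ≠ b) (v : FreeGroup A) :
    expSum (some c) (magnusSubst b c α β v) = expSum c v := by
  have h : (expSum (some c)).comp (magnusSubst b c α β) = expSum c := by
    ext z
    by_cases hzb : z = b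
    · simp [hzb, magnusSubst_of_left, expSum_of_ne hcb.symm, expSum_of_ne]
    by_cases hzc : z = c
    · simp [hzc, magnusSubst_of_right hcb, expSum_of_self, expSum_of_ne]
    · simp [magnusSubst_of_ne hzb hzc, expSum_of_ne hzc, expSum_of_ne, hzc]
  exact DFunLike.congr_fun h v

theorem magnusSubst_mem_avoiding {v : FreeGroup A} (hv : v ∈ avoiding c) :
    magnusSubst b c α β v ∈ avoiding (some c) := by
  refine map_mem_of_mem_avoiding (fun z hzc => ?_) hv
  by_cases hzb : z = b
  · rw [hzb, magnusSubst_of_left]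
    exact zpow_mem (of_mem_avoiding (by simp)) α
  · rw [magnusSubst_of_ne hzb hzc]
    exact of_mem_avoiding (by simpa using hzc)

/-- The exponents are chosen so that the exponent sum of the new letter vanishes. -/
theorem isTame_magnusSubst (hcb : c ≠ b) {w : FreeGroup A} (hb : w ∉ avoiding b)
    (ih : ∀ (X : Type u) (v : FreeGroup X), len v < len w → IsTame v) :
    IsTame (magnusSubst b c (expSum c w).toAdd (expSum b w).toAdd w) := by
  refine isTame_map_of_roll _ hb ?_ (fun z => ?_) ?_ ih
  · rw [magnusSubst_of_left, left_roll_of_none_zpow]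
  · by_cases hzb : z = b
    · rw [hzb, magnusSubst_of_left, left_roll_of_none_zpow, len_one]
      exact zero_le_one
    by_cases hzc : z = c
    · rw [hzc, magnusSubst_of_right hcb, left_roll_of_some_mul_zpow, len_of]
    · rw [magnusSubst_of_ne hzb hzc, roll_of_some, SemidirectProduct.left_inl, len_of]
  · rw [right_roll, expSum_none_magnusSubst hcb]
    apply Multiplicative.toAdd.injective
    simp only [toAdd_mul, toAdd_zpow, toAdd_one, smul_eq_mul]
    ring

end magnusSubst

end Substitution

section RootAdjunction

open Monoid

variable {C D : Type*} [Group C] [Group D]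

/-- The two embeddings of `ℤ` into `C` along which `RootAdjunction x α` is amalgamated. -/
def rootHom (x : C) (α : ℤ) : Bool → Multiplicative ℤ →* C
  | true => zpowersHom C x
  | false => zpowersHom C (x ^ α)

/-- An overgroup of `C` in which `x` has an `α`-th root. The amalgam of two copies of `C` in which
the first `x` is the `α`-th power of the second one is used instead of the amalgam of `C` with `ℤ`,
so that both factors have the same type. -/
abbrev RootAdjunction (x : C) (α : ℤ) := PushoutI (G := fun _ : Bool => C) (rootHom x α)

namespace RootAdjunction

/-- The embedding of `C` as the first factor. -/
def incl (x : C) (α : ℤ) : C →* RootAdjunction x α :=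
  PushoutI.of (G := fun _ : Bool => C) true

/-- The adjoined `α`-th root of `x`. -/
def root (x : C) (α : ℤ) : RootAdjunction x α := PushoutI.of (G := fun _ : Bool => C) false x

theorem root_zpow (x : C) (α : ℤ) : root x α ^ α = incl x α x := by
  have htrue := PushoutI.of_apply_eq_base (G := fun _ => C) (rootHom x α) true (.ofAdd 1)
  have hfalse := PushoutI.of_apply_eq_base (G := fun _ => C) (rootHom x α) false (.ofAdd 1)
  rw [← htrue] at hfalse
  simpa [rootHom, root, incl] using hfalse

variable {x : C} {α : ℤ}

theorem rootHom_injective (hx : ¬IsOfFinOrder x) (hα : α ≠ 0) :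
    ∀ i, Function.Injective (rootHom x α i)
  | true => injective_zpow_iff_not_isOfFinOrder.2 hx
  | false => by
    have h := (injective_zpow_iff_not_isOfFinOrder.2 hx).comp (mul_right_injective₀ hα)
    simpa [Function.comp_def, zpow_mul, rootHom, Function.Injective] using h

theorem incl_injective (hx : ¬IsOfFinOrder x) (hα : α ≠ 0) : Function.Injective (incl x α) :=
  PushoutI.of_injective (G := fun _ => C) (rootHom_injective hx hα) true

theorem mem_range_incl (hx : ¬IsOfFinOrder x) (hα : α ≠ 0) {c c' : C}
    (hc : ∀ y, y * c * y⁻¹ ∉ Subgroup.zpowers x) {u : RootAdjunction x α}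
    (hu : u * incl x α c * u⁻¹ = incl x α c') : u ∈ (incl x α).range :=
  mem_range_of_of_conj_eq (G := fun _ => C) (rootHom_injective hx hα) (i := true)
    (by simpa only [rootHom, Subgroup.range_zpowersHom] using hc) hu

theorem isConj_of_isConj_incl (hx : ¬IsOfFinOrder x) (hα : α ≠ 0) {c c' : C}
    (hc : ∀ y, y * c * y⁻¹ ∉ Subgroup.zpowers x) (h : IsConj (incl x α c) (incl x α c')) :
    IsConj c c' := by
  obtain ⟨u, hu⟩ := isConj_iff.1 h
  obtain ⟨y, rfl⟩ := mem_range_incl hx hα hc hu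
  refine isConj_iff.2 ⟨y, incl_injective hx hα ?_⟩
  rwa [map_mul, map_mul, map_inv]

/-- The homomorphism of root adjunctions induced by `q`. -/
def mapHom (q : C →* D) (x : C) (α : ℤ) : RootAdjunction x α →* RootAdjunction (q x) α :=
  PushoutI.lift (fun i => (PushoutI.of (φ := rootHom (q x) α) i).comp q)
    (PushoutI.base (rootHom (q x) α)) fun i => by
      have h : q.comp (rootHom x α i) = rootHom (q x) α i := by
        ext
        cases i <;> simp [rootHom]
      rw [MonoidHom.comp_assoc, h, PushoutI.of_comp_eq_base]

theorem mapHom_incl (q : C →* D) (c : C) : mapHom q x α (incl x α c) = incl (q x) α (q c) :=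
  PushoutI.lift_of (G := fun _ => C) ..

end RootAdjunction

end RootAdjunction

section Induction

open FreeGroup (of map)
open RootAdjunction

universe u

variable {A : Type u} {b c : A} {α β : ℤ}

open Classical in
/-- The embedding of the free group into the group with an `α`-th root of `b` adjoined factors
through `magnusSubst b c α β`; this is the second factor. -/
noncomputable def undoSubst (b c : A) (α β : ℤ) :
    FreeGroup (Option A) →* RootAdjunction (of b) α :=
  FreeGroup.lift fun o => o.elim (root (of b) α) fun z =>
    if z = c then incl (of b) α (of c) * root (of b) α ^ β else incl (of b) α (of z)

theorem undoSubst_magnusSubst (hcb : c ≠ b) (v : FreeGroup A) :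
    undoSubst b c α β (magnusSubst b c α β v) = incl (of b) α v := by
  have h : (undoSubst b c α β).comp (magnusSubst b c α β) = incl (of b) α := by
    ext z
    by_cases hzb : z = b
    · simp [hzb, magnusSubst_of_left, undoSubst, root_zpow]
    by_cases hzc : z = c
    · simp [hzc, magnusSubst_of_right hcb, undoSubst]
    · simp [magnusSubst_of_ne hzb hzc, undoSubst, hzc]
  exact DFunLike.congr_fun h v

theorem not_isOfFinOrder_of (b : A) : ¬IsOfFinOrder (of b) :=
  not_isOfFinOrder_of_isMulTorsionFree (FreeGroup.of_ne_one b)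

theorem magnusSubst_injective (hcb : c ≠ b) (hα : α ≠ 0) :
    Function.Injective (magnusSubst b c α β) := by
  have h := incl_injective (not_isOfFinOrder_of b) hα
  rw [← funext (undoSubst_magnusSubst (β := β) hcb)] at h
  exact Function.Injective.of_comp (f := undoSubst b c α β) h

theorem FreeAway.of_magnusSubst (hcb : c ≠ b) (hα : α ≠ 0) {w : FreeGroup A}
    (h : FreeAway (some c) (magnusSubst b c α β w)) : FreeAway c w := fun _ hv hvw =>
  (map_eq_one_iff _ (magnusSubst_injective hcb hα)).1
    (h _ (magnusSubst_mem_avoiding hv) (proj_map_eq_one _ hvw))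

theorem conj_notMem_zpowers_of_expSum_ne_one (hcb : c ≠ b) {w : FreeGroup A}
    (hw : expSum c w ≠ 1) (y : FreeGroup A) : y * w * y⁻¹ ∉ Subgroup.zpowers (of b) := by
  rintro ⟨n, hn⟩
  have h := congrArg (expSum c) hn
  simp only [map_zpow, expSum_of_ne hcb.symm, one_zpow, map_mul, map_inv,
    mul_inv_cancel_comm] at h
  exact hw h.symm

theorem exists_commute_undoSubst_eq_incl (hcb : c ≠ b) (hα : α ≠ 0) {w : FreeGroup A}
    (hw : expSum c w ≠ 1) {s : FreeGroup (Option A)} (hs : Commute s (magnusSubst b c α β w)) :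
    ∃ σ, Commute σ w ∧ incl (of b) α σ = undoSubst b c α β s := by
  have hcomm := hs.map (undoSubst b c α β)
  rw [undoSubst_magnusSubst hcb] at hcomm
  obtain ⟨σ, hσ⟩ := mem_range_incl (not_isOfFinOrder_of b) hα
    (conj_notMem_zpowers_of_expSum_ne_one hcb hw) (mul_inv_eq_of_eq_mul hcomm.eq)
  exact ⟨σ, (hσ ▸ hcomm).of_map (incl_injective (not_isOfFinOrder_of b) hα), hσ⟩

theorem FreeAway.not_isOfFinOrder_proj_of (hcb : c ≠ b) {w : FreeGroup A} (h : FreeAway c w) :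
    ¬IsOfFinOrder (proj w (of b)) := by
  have hinj := h.injective_proj_comp_map (j := fun _ : Unit => b)
    (Function.injective_of_subsingleton _) fun _ => hcb.symm
  have := hinj.isOfFinOrder_iff.not.2 (not_isOfFinOrder_of ())
  simpa using this

theorem conj_notMem_zpowers_of_isOfFinOrder {G : Type*} [Group G] {x g : G}
    (hx : ¬IsOfFinOrder x) (hg : IsOfFinOrder g) (hg_ne : g ≠ 1) (y : G) :
    y * g * y⁻¹ ∉ Subgroup.zpowers x := by
  rintro ⟨n, hn⟩
  have hfin : IsOfFinOrder (x ^ n) := (isConj_iff.2 ⟨y, hn.symm⟩).isOfFinOrder hg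
  have hn_ne : n ≠ 0 := by
    rintro rfl
    simp [eq_comm, hg_ne] at hn
  obtain ⟨m, hm, hxm⟩ := isOfFinOrder_iff_pow_eq_one.1 hfin
  rw [← zpow_natCast, ← zpow_mul] at hxm
  exact mul_ne_zero hn_ne (by exact_mod_cast hm.ne')
    (injective_zpow_iff_not_isOfFinOrder.2 hx (hxm.trans (zpow_zero x).symm))

theorem TorsionFromCentralizer.of_magnusSubst (hcb : c ≠ b) (hα : α ≠ 0) {w : FreeGroup A}
    (hw : expSum c w ≠ 1) (hc : FreeAway c w)
    (h : TorsionFromCentralizer (magnusSubst b c α β w)) : TorsionFromCentralizer w := by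
  intro g hg
  rcases eq_or_ne g 1 with rfl | hg_ne
  · exact ⟨1, .one_left w, by rw [map_one]⟩
  obtain ⟨s, hs, hsg⟩ := h _ ((mapRelator (magnusSubst b c α β) rfl).isOfFinOrder hg)
  obtain ⟨σ, hσw, hσ⟩ := exists_commute_undoSubst_eq_incl hcb hα hw hs
  refine ⟨σ, hσw, ?_⟩
  let undo := (mapHom (proj w) (of b) α).comp (undoSubst b c α β)
  have hundo (v) : undo (magnusSubst b c α β v) = incl (proj w (of b)) α (proj w v) := by
    rw [MonoidHom.comp_apply, undoSubst_magnusSubst hcb, mapHom_incl]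
  let undo' := descend undo (w := magnusSubst b c α β w) (by rw [hundo, proj_self, map_one])
  have hconj := undo'.map_isConj hsg
  obtain ⟨v, rfl⟩ := proj_surjective w g
  have hleft : undo' (proj _ s) = incl (proj w (of b)) α (proj w σ) := by
    rw [descend_proj, MonoidHom.comp_apply, ← hσ, mapHom_incl]
  rw [hleft, mapRelator_proj, descend_proj, hundo] at hconj
  have hb := hc.not_isOfFinOrder_proj_of hcb
  exact (isConj_of_isConj_incl hb hα (conj_notMem_zpowers_of_isOfFinOrder hb hg hg_ne)
    hconj.symm).symm

end Induction

section MainInduction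

open FreeGroup (of map)
open Monoid

universe u

variable {A : Type u}

theorem freeAway_of_zpow (c : A) (k : ℤ) : FreeAway c (of c ^ k) := fun v hv hvw => by
  rw [← erase_eq_self hv]
  exact map_eq_one_of_proj_eq_one (by rw [map_zpow, erase_of_self, one_zpow]) hvw

theorem eq_of_zpow_expSum {c : A} {w : FreeGroup A} (h : ∀ b, w ∉ avoiding b → b = c) :
    w = of c ^ (expSum c w).toAdd :=
  map_eq_map_of_occurring (f := MonoidHom.id _) (g := (zpowersHom _ (of c)).comp (expSum c))
    fun b hb => by simp [h b hb, expSum_of_self]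

theorem commute_freeGroup_unit (v w : FreeGroup Unit) : Commute v w := by
  rw [eq_of_zpow_expSum (w := v) fun b _ => Subsingleton.elim b (),
    eq_of_zpow_expSum (w := w) fun b _ => Subsingleton.elim b ()]
  exact .zpow_zpow_self _ _ _

theorem eq_one_of_isOfFinOrder_proj_one {v : FreeGroup A} (h : IsOfFinOrder (proj 1 v)) :
    v = 1 :=
  ((descend (w := 1) (MonoidHom.id (FreeGroup A)) rfl).isOfFinOrder h).eq_one'

open Classical in
/-- `⟨A ∣ t ^ k = 1⟩` is a free product of cyclic groups, one for each letter. -/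
theorem exists_isConj_proj_map_unit {t : A} {k : ℤ} {g : OneRelatorGroup (of t ^ k)}
    (hg : IsOfFinOrder g) :
    ∃ (a : A) (v : FreeGroup Unit), IsConj (proj (of t ^ k) (map (fun _ => a) v)) g ∧
      IsOfFinOrder (proj (of () ^ (Pi.single t k : A → ℤ) a) v) := by
  let e : A → ℤ := Pi.single t k
  let toFactors : FreeGroup A →* CoprodI fun a => OneRelatorGroup (of () ^ e a) :=
    FreeGroup.lift fun a => CoprodI.of (i := a) (proj _ (of ()))
  have hto : toFactors (of t ^ k) = 1 := by
    have h : proj (of () ^ e t) (of () ^ k) = 1 := by simpa [e] using proj_self (of () ^ e t)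
    rw [map_zpow, FreeGroup.lift_apply_of, ← map_zpow, ← map_zpow, h, map_one]
  have hfrom (a : A) : proj (of t ^ k) (map (fun _ => a) (of () ^ e a)) = 1 := by
    by_cases ha : a = t
    · subst ha
      simpa [e] using proj_self (of a ^ k)
    · simp [e, ha]
  let fromFactors : CoprodI (fun a => OneRelatorGroup (of () ^ e a)) →*
      OneRelatorGroup (of t ^ k) :=
    CoprodI.lift fun a => descend ((proj (of t ^ k)).comp (map fun _ => a)) (hfrom a)
  have hcomp : fromFactors.comp toFactors = proj (of t ^ k) := by
    ext a
    simp [fromFactors, toFactors, descend_proj]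
  have : Nonempty A := ⟨t⟩
  have hfin := (descend toFactors hto).isOfFinOrder hg
  obtain ⟨a, x, hx⟩ := exists_isConj_coprodI_of hfin
  obtain ⟨v, rfl⟩ := proj_surjective _ x
  obtain ⟨u, rfl⟩ := proj_surjective _ g
  refine ⟨a, v, ?_, (CoprodI.of_injective a).isOfFinOrder_iff.1 (hx.symm.isOfFinOrder hfin)⟩
  have hconj := fromFactors.map_isConj hx
  rw [CoprodI.lift_of] at hconj
  rwa [descend_proj, descend_proj, ← fromFactors.comp_apply, hcomp] at hconj

theorem torsionFromCentralizer_of_zpow (t : A) (k : ℤ) : TorsionFromCentralizer (of t ^ k) := by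
  classical
  intro g hg
  obtain ⟨a, v, hconj, hv⟩ := exists_isConj_proj_map_unit hg
  refine ⟨_, ?_, hconj⟩
  by_cases ha : a = t
  · subst ha
    simpa using (commute_freeGroup_unit v (of () ^ k)).map (map fun _ => a)
  · rw [Pi.single_eq_of_ne ha, zpow_zero] at hv
    rw [eq_one_of_isOfFinOrder_proj_one hv, map_one]
    exact .one_left _

theorem freeAway_and_torsion {c : A} {w : FreeGroup A} (hcw : w ∉ avoiding c)
    (ih : ∀ (X : Type u) (v : FreeGroup X), len v < len w → IsTame v) :
    (IsEssential c w → FreeAway c w) ∧ TorsionFromCentralizer w := by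
  by_cases hexp : expSum c w = 1
  · have htame := isTame_of_expSum_eq_one hcw hexp ih
    exact ⟨htame.freeAway c, htame.torsion⟩
  by_cases hb : ∃ b, w ∉ avoiding b ∧ b ≠ c
  · obtain ⟨b, hbw, hbc⟩ := hb
    have hα : (expSum c w).toAdd ≠ 0 := hexp
    have htame := isTame_magnusSubst hbc.symm hbw ih
    have hfree : FreeAway c w := .of_magnusSubst hbc.symm hα
      (htame.freeAway _ (isEssential_of_expSum_ne_one
        ((expSum_some_magnusSubst hbc.symm w).trans_ne hexp)))
    exact ⟨fun _ => hfree, .of_magnusSubst hbc.symm hα hexp hfree htame.torsion⟩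
  · push Not at hb
    rw [eq_of_zpow_expSum hb]
    exact ⟨fun _ => freeAway_of_zpow c _, torsionFromCentralizer_of_zpow c _⟩

theorem isTame {A : Type u} (w : FreeGroup A) : IsTame w := by
  induction hn : len w using Nat.strong_induction_on generalizing A with
  | _ n ih =>
    subst hn
    have key {c : A} (hc : w ∉ avoiding c) := freeAway_and_torsion hc fun X v hv => ih _ hv v rfl
    refine ⟨fun c hc => (key hc.notMem_avoiding).1 hc, ?_⟩
    rcases eq_or_ne w 1 with rfl | hw
    · exact isTame_one.torsion
    · obtain ⟨c, hc⟩ := exists_notMem_avoiding_of_ne_one hw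
      exact (key hc).2

end MainInduction

section Centralizers

open FreeGroup (of)

variable {A : Type*}

theorem eq_one_of_commute_of_of {x y : A} (hxy : x ≠ y) {z : FreeGroup A}
    (hx : Commute (of x) z) (hy : Commute (of y) z) : z = 1 := by
  classical
  by_contra hz
  obtain ⟨p, L, hL⟩ := List.exists_cons_of_ne_nil (FreeGroup.toWord_eq_nil_iff.not.2 hz)
  obtain ⟨c, hc, hcz⟩ : ∃ c, c ≠ p.1 ∧ Commute (of c) z := by
    by_cases h : x = p.1
    · exact ⟨y, fun h' => hxy (h.trans h'.symm), hy⟩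
    · exact ⟨x, h, hx⟩
  have hleft : (of c * z).toWord = (c, true) :: z.toWord := by
    rw [FreeGroup.toWord_mul, FreeGroup.toWord_of, List.singleton_append, FreeGroup.reduce.cons,
      FreeGroup.reduce_toWord, hL]
    simp [hc]
  have hright : (z * of c).toWord.Sublist (z.toWord ++ [(c, true)]) := by
    simpa using FreeGroup.toWord_mul_sublist z (of c)
  rw [← hcz.eq, hleft] at hright
  have heq := hright.eq_of_length (by simp)
  rw [hL, List.cons_append, List.cons.injEq] at heq
  exact hc (congrArg Prod.fst heq.1)

theorem isCyclic_of_forall_commute {G : Type*} [Group G] [IsFreeGroup G] {w : G}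
    (hw : w ≠ 1) (hcen : ∀ z, Commute z w) : IsCyclic G := by
  let φ := IsFreeGroup.toFreeGroup G
  have hφw : φ w ≠ 1 := by simpa using hw
  have hcomm (x) : Commute (of x) (φ w) := by
    simpa using (hcen (φ.symm (of x))).map φ
  have hsub : Subsingleton (IsFreeGroup.Generators G) := ⟨fun x y => by
    by_contra hxy
    exact hφw (eq_one_of_commute_of_of hxy (hcomm x) (hcomm y))⟩
  cases isEmpty_or_nonempty (IsFreeGroup.Generators G)
  · exact (hφw (Subsingleton.elim _ _)).elim
  · let := Classical.inhabited_of_nonempty ‹Nonempty (IsFreeGroup.Generators G)›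
    let := Unique.mk' (IsFreeGroup.Generators G)
    exact isCyclic_of_surjective φ.symm φ.symm.surjective

theorem isCyclic_centralizer {w : FreeGroup A} (hw : w ≠ 1) :
    IsCyclic (Subgroup.centralizer {w}) :=
  isCyclic_of_forall_commute
    (w := ⟨w, Subgroup.mem_centralizer_singleton_iff.2 rfl⟩) (by simpa using hw)
    fun z => Subtype.ext (Subgroup.mem_centralizer_singleton_iff.1 z.2)

theorem mem_zpowers_of_forall_ne_pow {G : Type*} [Group G] {r d : G}
    (hpow : ¬∃ (s : G) (k : ℕ), 2 ≤ k ∧ r = s ^ k) (hr : r ∈ Subgroup.zpowers d) :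
    d ∈ Subgroup.zpowers r := by
  have eq_of_pow {s : G} {m : ℕ} (hm : r = s ^ m) : s = r := by
    have hm_lt : m < 2 := not_le.1 fun h => hpow ⟨s, m, h, hm⟩
    interval_cases m
    · exact (hpow ⟨1, 2, le_rfl, by rw [hm, pow_zero, one_pow]⟩).elim
    · rw [hm, pow_one]
  obtain ⟨p, hp⟩ := Subgroup.mem_zpowers_iff.1 hr
  obtain ⟨m, rfl | rfl⟩ := p.eq_nat_or_neg
  · exact eq_of_pow (by rw [← hp, zpow_natCast]) ▸ Subgroup.mem_zpowers r
  · have hinv : d⁻¹ = r := eq_of_pow (m := m) (by rw [← hp, zpow_neg, zpow_natCast, inv_pow])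
    exact inv_mem_iff.1 (hinv ▸ Subgroup.mem_zpowers _)

theorem mem_zpowers_of_commute_pow {r s : FreeGroup A}
    (hpow : ¬∃ (s : FreeGroup A) (k : ℕ), 2 ≤ k ∧ r = s ^ k) {n : ℕ} (hn : n ≠ 0)
    (hs : Commute s (r ^ n)) : s ∈ Subgroup.zpowers r := by
  have hr : r ≠ 1 := fun h => hpow ⟨1, 2, le_rfl, by rw [h, one_pow]⟩
  have hcyc := isCyclic_centralizer ((pow_eq_one_iff_left hn).not.2 hr)
  obtain ⟨d, hd⟩ := hcyc.exists_generator
  have hgen {z : FreeGroup A} (hz : Commute z (r ^ n)) : z ∈ Subgroup.zpowers d.1 := by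
    obtain ⟨m, hm⟩ := hd ⟨z, Subgroup.mem_centralizer_singleton_iff.2 hz⟩
    exact ⟨m, congrArg Subtype.val hm⟩
  have hdr := mem_zpowers_of_forall_ne_pow hpow (hgen (.self_pow r n))
  exact Subgroup.zpowers_le.2 hdr (hgen hs)

end Centralizers

end OneRelator

theorem one_relator_torsion_elements_conjugate_to_power_general {A : Type*}
    (r : FreeGroup A) (hpow : ¬ ∃ (s : FreeGroup A) (k : ℕ), 2 ≤ k ∧ r = s ^ k)
    {n : ℕ} (hn : n ≠ 0)
    (g : PresentedGroup ({r ^ n} : Set (FreeGroup A))) (hg : IsOfFinOrder g) :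
    ∃ (h : PresentedGroup ({r ^ n} : Set (FreeGroup A))) (i : ℤ),
      g = h * (PresentedGroup.mk ({r ^ n} : Set (FreeGroup A)) r) ^ i * h⁻¹ := by
  obtain ⟨s, hs, hsg⟩ := (OneRelator.isTame (r ^ n)).torsion g hg
  obtain ⟨i, rfl⟩ := OneRelator.mem_zpowers_of_commute_pow hpow hn hs
  obtain ⟨h, hh⟩ := isConj_iff.1 hsg
  exact ⟨h, i, by rw [← hh, ← map_zpow]⟩

/-- **Karrass–Magnus–Solitar (1960), torsion elements:** in the one-relator group
with torsion `⟨A ∣ rⁿ = 1⟩`, every element of finite order is conjugate to a power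
of the image of `r`. -/
theorem one_relator_torsion_elements_conjugate_to_power {A : Type*} [DecidableEq A]
    (r : FreeGroup A) (hr : r ≠ 1) (hcyc : FreeGroup.CyclicallyReduced r)
    (hpow : ¬ ∃ (s : FreeGroup A) (k : ℕ), 2 ≤ k ∧ r = s ^ k)
    (n : ℕ) (hn : 2 ≤ n)
    (g : PresentedGroup ({r ^ n} : Set (FreeGroup A)))
    (k : ℕ) (hk : 1 ≤ k) (hg : g ^ k = 1) :
    ∃ (h : PresentedGroup ({r ^ n} : Set (FreeGroup A))) (i : ℤ),
      g = h * (PresentedGroup.mk ({r ^ n} : Set (FreeGroup A)) r) ^ i * h⁻¹ :=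
  one_relator_torsion_elements_conjugate_to_power_general r hpow (by omega) g
    (isOfFinOrder_iff_pow_eq_one.2 ⟨k, hk, hg⟩)
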